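/- arXiv:1405.1643 — 2 statements merged into one kernel-verified Lean document; each statement's English description precedes it below -/
import Mathlib

section
/- Let τ be a C¹ diffeomorphism of the open unit disk D = {p ∈ ℝ² : ‖p‖ < 1} onto itself such that τ ∘ τ = id and τ reverses orientation, i.e. the determinant of the derivative of τ is strictly negative at every point of D. Then the fixed-point set F = {p ∈ D : τ(p) = p} is nonempty, connected, closed in D, and is a 1-dimensional C¹ submanifold of D homeomorphic to ℝ (a single arc); moreover D \ F has exactly two connected components, which are interchanged by τ. -/
open Metric Set

namespace InvArc

open Complex ComplexConjugate Filter Topology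

/-- holomorphic Wirtinger coefficient of a real linear map -/
noncomputable def wa (L : ℂ →L[ℝ] ℂ) : ℂ := (L 1 - I * L I) / 2

/-- antiholomorphic Wirtinger coefficient of a real linear map -/
noncomputable def wb (L : ℂ →L[ℝ] ℂ) : ℂ := (L 1 + I * L I) / 2

lemma wirt (L : ℂ →L[ℝ] ℂ) (z : ℂ) : L z = wa L * z + wb L * conj z := by
  have h : L z = (z.re : ℂ) * L 1 + (z.im : ℂ) * L I := by
    have : z = z.re • (1 : ℂ) + z.im • I := by
      simp [Complex.re_add_im]
    conv_lhs => rw [this]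
    rw [map_add, map_smul, map_smul]
    simp
  rw [h, wa, wb]
  conv_rhs => rw [← Complex.re_add_im z]
  simp only [map_add, map_mul, conj_ofReal, conj_I]
  linear_combination ((z.im : ℂ) * L I) * I_sq

lemma wdet (L : ℂ →L[ℝ] ℂ) : L.det = normSq (wa L) - normSq (wb L) := by
  have : L.det = LinearMap.det (L : ℂ →ₗ[ℝ] ℂ) := rfl
  rw [this, ← LinearMap.det_toMatrix Complex.basisOneI, Matrix.det_fin_two]
  simp only [LinearMap.toMatrix_apply, Complex.coe_basisOneI, Complex.coe_basisOneI_repr]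
  simp [wa, wb, normSq_apply]
  ring

lemma wlin (L : ℂ →L[ℝ] ℂ) (h : ∀ z, L (L z) = z) (hd : L.det < 0) :
    (wa L).re = 0 ∧ wb L * conj (wb L) = (1 + wa L) * (1 - wa L) := by
  rw [wdet] at hd
  have h1 := h 1
  have hI := h I
  rw [wirt L (L 1), wirt L 1] at h1
  rw [wirt L (L I), wirt L I] at hI
  set a := wa L
  set b := wb L
  simp only [map_add, map_mul, map_neg, conj_I, map_one, mul_one] at h1 hI
  have e1 : a * a + b * conj b = 1 := by
    linear_combination (h1 - I * hI)/2 + ((a*a - a*b - b*conj a + b * conj b - 1)/2) * I_sq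
  have e2 : b * (a + conj a) = 0 := by
    linear_combination h1 - e1
  have hb : b ≠ 0 := by
    intro hb
    rw [hb] at hd
    simp at hd
    linarith [normSq_nonneg a]
  have e3 : a + conj a = 0 := by
    rcases mul_eq_zero.mp e2 with h | h
    · exact absurd h hb
    · exact h
  constructor
  · have := congrArg Complex.re e3
    simp at this
    linarith
  · linear_combination e1

lemma wa_cont : Continuous wa := by
  unfold wa
  fun_prop

lemma wb_cont : Continuous wb := by
  unfold wb
  fun_prop

lemma ball_sc : IsSimplyConnected (ball (0 : ℂ) 1) := by
  have : ContractibleSpace (ball (0 : ℂ) 1) :=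
    (convex_ball (0 : ℂ) 1).contractibleSpace ⟨0, by simp⟩
  exact SimplyConnectedSpace.ofContractible _

lemma ball_pc : IsPreconnected (ball (0 : ℂ) 1) := (convex_ball (0 : ℂ) 1).isPreconnected

/-- continuous logarithm of a constant function is constant -/
lemma log_const {S : Set ℂ} (hS : IsPreconnected S) {φ : ℂ → ℂ} (hφ : ContinuousOn φ S) {c : ℂ}
    (h : ∀ z ∈ S, exp (φ z) = c) {x y : ℂ} (hx : x ∈ S) (hy : y ∈ S) : φ x = φ y := by
  have hd : IsDiscrete (Set.range fun n : ℤ => φ y + n * (2 * Real.pi * I)) := by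
    have h1 : Topology.IsClosedEmbedding (fun n : ℤ => (n : ℝ)) := Int.isClosedEmbedding_coe_real
    have h2 : Topology.IsInducing (fun r : ℝ => φ y + r * (2 * Real.pi * I)) := by
      have hp : (Real.pi : ℝ) ≠ 0 := Real.pi_ne_zero
      refine Topology.IsInducing.of_comp (g := fun z : ℂ => (z - φ y).im / (2 * Real.pi))
        (by fun_prop) (by fun_prop) ?_
      have : ((fun z : ℂ => (z - φ y).im / (2 * Real.pi)) ∘
          fun r : ℝ => φ y + r * (2 * Real.pi * I)) = id := by
        ext r
        simp
      rw [this]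
      exact Topology.IsInducing.id
    have h3 : Topology.IsInducing (fun n : ℤ => φ y + n * (2 * Real.pi * I)) := by
      have := h2.comp h1.isInducing
      simpa [Function.comp_def] using this
    exact (h3.isDiscrete_range)
  refine hS.constant_of_mapsTo hd hφ ?_ hx hy
  intro z hz
  obtain ⟨n, hn⟩ := Complex.exp_eq_exp_iff_exists_int.mp ((h z hz).trans (h y hy).symm)
  exact ⟨n, hn.symm⟩

/-- Any continuous fixed-point-free involution of the disk is impossible. -/
lemma exists_fixed (τ : ℂ → ℂ) (hc : ContinuousOn τ (ball 0 1)) (hm : MapsTo τ (ball 0 1) (ball 0 1))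
    (hi : ∀ p ∈ ball (0 : ℂ) 1, τ (τ p) = p) : ∃ p ∈ ball (0 : ℂ) 1, τ p = p := by
  by_contra! hne
  have hg : ContinuousOn (fun p => p - τ p) (ball 0 1) := continuousOn_id.sub hc
  obtain ⟨θ, hθc, hθ⟩ := exists_continuousOn_eqOn_exp_comp ball_sc isOpen_ball hg (by
    rintro ⟨p, hp, h⟩
    exact hne p hp (sub_eq_zero.mp h).symm)
  have h1 : ∀ p ∈ ball (0 : ℂ) 1, exp (θ (τ p) - θ p) = -1 := by
    intro p hp
    have e1 : exp (θ p) = p - τ p := hθ hp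
    have e2 : exp (θ (τ p)) = τ p - τ (τ p) := hθ (hm hp)
    rw [hi p hp] at e2
    have : p - τ p ≠ 0 := fun h => hne p hp (sub_eq_zero.mp h).symm
    rw [exp_sub, e1, e2, div_eq_iff this]
    ring
  have h0 : (0 : ℂ) ∈ ball (0 : ℂ) 1 := by simp
  have h2 := log_const ball_pc ((hθc.comp hc hm).sub hθc) h1 h0 (hm h0)
  simp only [Pi.sub_apply, Function.comp_apply, hi 0 h0] at h2
  have h3 : θ (τ 0) - θ 0 = 0 := by linear_combination h2 / 2
  have h4 := h1 0 h0
  rw [h3, exp_zero] at h4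
  norm_num at h4

/-- The line field spanned by `p - τ p`, extended over the fixed point set. -/
noncomputable def lf (τ : ℂ → ℂ) (p : ℂ) : ℂ :=
  open Classical in
  if τ p = p then - wb (fderiv ℝ τ p) / (1 + wa (fderiv ℝ τ p)) else (p - τ p) / conj (p - τ p)

section setup
lemma sdiff {τ : ℂ → ℂ} (hs : ContDiffOn ℝ 1 τ (ball 0 1))
    {p : ℂ} (hp : p ∈ ball (0 : ℂ) 1) : HasStrictFDerivAt τ (fderiv ℝ τ p) p :=
  (hs.contDiffAt (isOpen_ball.mem_nhds hp)).hasStrictFDerivAt one_ne_zero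

lemma dcont {τ : ℂ → ℂ} (hs : ContDiffOn ℝ 1 τ (ball 0 1))
    : ContinuousOn (fderiv ℝ τ) (ball 0 1) :=
  hs.continuousOn_fderiv_of_isOpen isOpen_ball le_rfl

lemma wfix {τ : ℂ → ℂ} (hs : ContDiffOn ℝ 1 τ (ball 0 1))
    (hi : ∀ p ∈ ball (0 : ℂ) 1, τ (τ p) = p)
    (ho : ∀ p ∈ ball (0 : ℂ) 1, (fderiv ℝ τ p).det < 0)
    {p : ℂ} (hp : p ∈ ball (0 : ℂ) 1) (hf : τ p = p) :
    (wa (fderiv ℝ τ p)).re = 0 ∧ wb (fderiv ℝ τ p) * conj (wb (fderiv ℝ τ p)) =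
      (1 + wa (fderiv ℝ τ p)) * (1 - wa (fderiv ℝ τ p)) := by
  refine wlin _ ?_ (ho p hp)
  have h1 := (sdiff hs hp).hasFDerivAt
  have h2 : HasFDerivAt τ (fderiv ℝ τ p) (τ p) := by rw [hf]; exact h1
  have h3 := h2.comp p h1
  have h4 : HasFDerivAt (τ ∘ τ) (ContinuousLinearMap.id ℝ ℂ) p := by
    refine (hasFDerivAt_id p).congr_of_eventuallyEq ?_
    filter_upwards [isOpen_ball.mem_nhds hp] with q hq
    simp [hi q hq]
  have h5 := h3.unique h4
  intro z
  exact congrArg (fun L : ℂ →L[ℝ] ℂ => L z) h5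

lemma one_add_ne {a : ℂ} (ha : a.re = 0) : 1 + a ≠ 0 := by
  intro h
  have := congrArg Complex.re h
  simp [ha] at this

lemma conj_of_re {a : ℂ} (ha : a.re = 0) : conj a = -a := by
  apply Complex.ext <;> simp [ha]

lemma lf_norm {τ : ℂ → ℂ} (hs : ContDiffOn ℝ 1 τ (ball 0 1))
    (hi : ∀ p ∈ ball (0 : ℂ) 1, τ (τ p) = p)
    (ho : ∀ p ∈ ball (0 : ℂ) 1, (fderiv ℝ τ p).det < 0)
    {p : ℂ} (hp : p ∈ ball (0 : ℂ) 1) : ‖lf τ p‖ = 1 := by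
  unfold lf
  split_ifs with h
  · obtain ⟨h1, h2⟩ := wfix hs hi ho hp h
    set a := wa (fderiv ℝ τ p)
    set b := wb (fderiv ℝ τ p)
    have h3 : ‖b‖ ^ 2 = ‖1 + a‖ ^ 2 := by
      have : ((‖b‖ ^ 2 : ℝ) : ℂ) = ((‖1 + a‖ ^ 2 : ℝ) : ℂ) := by
        push_cast
        rw [← Complex.mul_conj', ← Complex.mul_conj', h2, map_add, map_one, conj_of_re h1]
        ring
      exact_mod_cast this
    have h4 : ‖b‖ = ‖1 + a‖ := by
      rwa [sq_eq_sq₀ (norm_nonneg _) (norm_nonneg _)] at h3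
    rw [norm_div, norm_neg, h4, div_self]
    simpa using one_add_ne h1
  · rw [norm_div, RCLike.norm_conj, div_self]
    simpa [sub_eq_zero] using fun h' => h h'.symm

lemma lf_cont {τ : ℂ → ℂ} (hs : ContDiffOn ℝ 1 τ (ball 0 1))
    (hi : ∀ p ∈ ball (0 : ℂ) 1, τ (τ p) = p)
    (ho : ∀ p ∈ ball (0 : ℂ) 1, (fderiv ℝ τ p).det < 0)
    : ContinuousOn (lf τ) (ball 0 1) := by
  intro p hp
  apply ContinuousAt.continuousWithinAt
  have hτc : ContinuousAt τ p := (sdiff hs hp).continuousAt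
  by_cases hf : τ p = p
  · obtain ⟨h1, h2⟩ := wfix hs hi ho hp hf
    set a := wa (fderiv ℝ τ p) with ha
    set b := wb (fderiv ℝ τ p) with hb
    have hlp : lf τ p = -b / (1 + a) := by simp [lf, hf, ha, hb]
    have hne := one_add_ne h1
    have key : Tendsto (fun q => (1 + a) * lf τ q + b) (𝓝 p) (𝓝 0) := by
      rw [Metric.tendsto_nhds]
      intro ε hε
      have hdc : ContinuousAt (fderiv ℝ τ) p := (dcont hs).continuousAt (isOpen_ball.mem_nhds hp)
      have hac : ContinuousAt (fun q => wa (fderiv ℝ τ q)) p := wa_cont.continuousAt.comp hdc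
      have hbc : ContinuousAt (fun q => wb (fderiv ℝ τ q)) p := wb_cont.continuousAt.comp hdc
      have ea := Metric.continuousAt_iff'.mp hac (ε / 2) (by positivity)
      have eb := Metric.continuousAt_iff'.mp hbc (ε / 2) (by positivity)
      have hso := (sdiff hs hp).isLittleO.def (c := ε / 2) (by positivity)
      have hpr : Tendsto (fun q => (q, τ q)) (𝓝 p) (𝓝 (p, p)) := by
        have : Tendsto (fun q => (q, τ q)) (𝓝 p) (𝓝 (p, τ p)) := (continuousAt_id.prodMk hτc)
        rwa [hf] at this
      filter_upwards [ea, eb, hpr.eventually hso, isOpen_ball.mem_nhds hp] with q qa qb qs qD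
      rw [dist_zero_right]
      by_cases hq : τ q = q
      · have hn := lf_norm hs hi ho qD
        obtain ⟨h1', h2'⟩ := wfix hs hi ho qD hq
        have hl : (1 + wa (fderiv ℝ τ q)) * lf τ q = - wb (fderiv ℝ τ q) := by
          rw [lf, if_pos hq]
          field_simp [one_add_ne h1']
        have : (1 + a) * lf τ q + b =
            (a - wa (fderiv ℝ τ q)) * lf τ q + (b - wb (fderiv ℝ τ q)) := by
          linear_combination hl
        rw [this]
        calc _ ≤ ‖a - wa (fderiv ℝ τ q)‖ * ‖lf τ q‖ + ‖b - wb (fderiv ℝ τ q)‖ := by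
              refine (norm_add_le _ _).trans ?_
              rw [norm_mul]
          _ < ε := by
              rw [dist_comm, dist_eq_norm] at qa qb
              rw [hn]
              linarith
      · have hne' : q - τ q ≠ 0 := fun h => hq (sub_eq_zero.mp h).symm
        simp only [hi q qD] at qs
        rw [wirt (fderiv ℝ τ p)] at qs
        have : (1 + a) * lf τ q + b =
            - (τ q - q - (a * (q - τ q) + b * conj (q - τ q))) / conj (q - τ q) := by
          have hc : conj (q - τ q) ≠ 0 := (map_ne_zero _).mpr hne'
          rw [lf, if_neg hq]
          field_simp
          ring
        rw [this, norm_div, norm_neg, RCLike.norm_conj, div_lt_iff₀ (norm_pos_iff.mpr hne')]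
        have : 0 < ‖q - τ q‖ := norm_pos_iff.mpr hne'
        refine qs.trans_lt ?_
        nlinarith
    have k2 : Tendsto (fun q => (((1 + a) * lf τ q + b) - b) / (1 + a)) (𝓝 p)
        (𝓝 ((0 - b) / (1 + a))) := (key.sub_const b).div_const _
    have : lf τ = fun q => (((1 + a) * lf τ q + b) - b) / (1 + a) := by
      ext q
      field_simp
      ring
    rw [ContinuousAt, hlp]
    rw [this]
    convert k2 using 2
    ring
  · have hev : lf τ =ᶠ[𝓝 p] fun q => (q - τ q) / conj (q - τ q) := by
      have : ∀ᶠ q in 𝓝 p, τ q ≠ q := by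
        filter_upwards [(hτc.sub continuousAt_id).eventually_ne (sub_ne_zero.mpr hf)] with q hq
        exact sub_ne_zero.mp hq
      filter_upwards [this] with q hq
      rw [lf, if_neg hq]
    refine ContinuousAt.congr ?_ hev.symm
    refine ContinuousAt.div (continuousAt_id.sub hτc)
      (Complex.continuous_conj.continuousAt.comp (continuousAt_id.sub hτc)) ?_
    exact (map_ne_zero _).mpr fun h' => hf (sub_eq_zero.mp h').symm


/-- The basic structure: `p - τ p = h p * v p` with `h` real, odd under `τ`. -/
lemma data {τ : ℂ → ℂ} (hs : ContDiffOn ℝ 1 τ (ball 0 1))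
    (hm : MapsTo τ (ball 0 1) (ball 0 1))
    (hi : ∀ p ∈ ball (0 : ℂ) 1, τ (τ p) = p)
    (ho : ∀ p ∈ ball (0 : ℂ) 1, (fderiv ℝ τ p).det < 0)
    : ∃ (v a : ℂ → ℂ) (h : ℂ → ℝ), ContinuousOn v (ball 0 1) ∧ ContinuousOn a (ball 0 1) ∧
    ContinuousOn h (ball 0 1) ∧ (∀ p ∈ ball (0 : ℂ) 1, v p * conj (v p) = 1) ∧
    (∀ p ∈ ball (0 : ℂ) 1, p - τ p = h p * v p) ∧
    (∀ p ∈ ball (0 : ℂ) 1, h (τ p) = - h p) ∧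
    (∀ p ∈ ball (0 : ℂ) 1, τ p = p → (a p).re = 0 ∧
      ∀ z, fderiv ℝ τ p z = a p * z - (1 + a p) * v p ^ 2 * conj z) := by
  have hτc : ContinuousOn τ (ball 0 1) := hs.continuousOn
  obtain ⟨p₀, hp₀, hf₀⟩ := exists_fixed τ hτc hm hi
  obtain ⟨v, hvc, hv⟩ := exists_continuousOn_pow_eq ball_sc isOpen_ball (lf_cont hs hi ho) (by
    rintro ⟨p, hp, h⟩
    have := lf_norm hs hi ho hp
    rw [h] at this
    simp at this) two_ne_zero
  have hvn : ∀ p ∈ ball (0 : ℂ) 1, ‖v p‖ = 1 := by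
    intro p hp
    have := lf_norm hs hi ho hp
    rw [← hv p, norm_pow] at this
    exact (pow_eq_one_iff_of_nonneg (norm_nonneg _) two_ne_zero).mp this
  have hv1 : ∀ p ∈ ball (0 : ℂ) 1, v p * conj (v p) = 1 := by
    intro p hp
    rw [Complex.mul_conj', hvn p hp]
    simp
  have hvτ : EqOn (v ∘ τ) v (ball 0 1) := by
    refine ball_pc.eq_of_sq_eq (hvc.comp hτc hm) hvc ?_ ?_ hp₀ (by simp [hf₀])
    · intro p hp
      simp only [Pi.pow_apply, Function.comp_apply, hv]
      by_cases hf : τ p = p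
      · rw [hf]
      · have hf' : τ (τ p) ≠ τ p := by rw [hi p hp]; exact fun h => hf h.symm
        rw [lf, if_neg hf', lf, if_neg hf, hi p hp, ← neg_sub p, map_neg, neg_div_neg_eq]
    · intro p hp h
      have := hvn p hp
      rw [h] at this
      simp at this
  have hreal : ∀ p ∈ ball (0 : ℂ) 1, p - τ p = (((p - τ p) * conj (v p)).re : ℂ) * v p := by
    intro p hp
    have h1 := hv1 p hp
    have : conj ((p - τ p) * conj (v p)) = (p - τ p) * conj (v p) := by
      by_cases hf : τ p = p
      · simp [hf]
      · have hne : conj (p - τ p) ≠ 0 := (map_ne_zero _).mpr fun h' => hf (sub_eq_zero.mp h').symm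
        have h2 := hv p
        rw [lf, if_neg hf, eq_div_iff hne] at h2
        rw [map_mul, conj_conj]
        linear_combination conj (v p) * h2 - v p * conj (p - τ p) * h1
    rw [Complex.conj_eq_iff_re.mp this]
    linear_combination -(p - τ p) * h1
  refine ⟨v, fun p => wa (fderiv ℝ τ p), fun p => ((p - τ p) * conj (v p)).re, hvc,
    wa_cont.comp_continuousOn (dcont hs), ?_, hv1, hreal, ?_, ?_⟩
  · exact Complex.continuous_re.comp_continuousOn ((continuousOn_id.sub hτc).mul
      (Complex.continuous_conj.comp_continuousOn hvc))
  · intro p hp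
    have := hvτ hp
    simp only [Function.comp_apply] at this
    simp only [hi p hp, this, ← neg_sub p, neg_mul, Complex.neg_re]
  · intro p hp hf
    obtain ⟨h1, h2⟩ := wfix hs hi ho hp hf
    refine ⟨h1, fun z => ?_⟩
    have h3 := hv p
    rw [lf, if_pos hf, eq_div_iff (one_add_ne h1)] at h3
    rw [wirt]
    linear_combination conj z * h3

end setup
end InvArc

namespace InvArc
open Complex ComplexConjugate Filter Topology

/-- Package of the data attached to the involution. -/
structure Dat where
  τ : ℂ → ℂ
  v : ℂ → ℂ
  a : ℂ → ℂ
  h : ℂ → ℝ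
  hs : ContDiffOn ℝ 1 τ (ball 0 1)
  hm : MapsTo τ (ball 0 1) (ball 0 1)
  hi : ∀ p ∈ ball (0 : ℂ) 1, τ (τ p) = p
  hv : ContinuousOn v (ball 0 1)
  ha : ContinuousOn a (ball 0 1)
  hh : ContinuousOn h (ball 0 1)
  hv1 : ∀ p ∈ ball (0 : ℂ) 1, v p * conj (v p) = 1
  hf : ∀ p ∈ ball (0 : ℂ) 1, p - τ p = h p * v p
  hodd : ∀ p ∈ ball (0 : ℂ) 1, h (τ p) = - h p
  hfix : ∀ p ∈ ball (0 : ℂ) 1, τ p = p → (a p).re = 0 ∧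
      ∀ z, fderiv ℝ τ p z = a p * z - (1 + a p) * v p ^ 2 * conj z

namespace Dat
variable (X : Dat)

/-- The fixed point set. -/
def F : Set ℂ := {p ∈ ball (0 : ℂ) 1 | X.τ p = p}

/-- A normal field along the fixed point set. -/
noncomputable def N (p : ℂ) : ℂ := (1 + X.a p) * X.v p

lemma N_cont : ContinuousOn X.N (ball 0 1) := (continuousOn_const.add X.ha).mul X.hv

lemma v_ne {p : ℂ} (hp : p ∈ ball (0 : ℂ) 1) : X.v p ≠ 0 := by
  intro h
  have := X.hv1 p hp
  simp [h] at this

lemma N_ne {p : ℂ} (hp : p ∈ X.F) : X.N p ≠ 0 :=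
  mul_ne_zero (one_add_ne (X.hfix p hp.1 hp.2).1) (X.v_ne hp.1)

lemma mem_F_iff {p : ℂ} (hp : p ∈ ball (0 : ℂ) 1) : p ∈ X.F ↔ X.h p = 0 := by
  have h1 := X.hf p hp
  have h2 := X.v_ne hp
  constructor
  · intro h
    rw [h.2, sub_self, eq_comm, mul_eq_zero] at h1
    simpa [h2] using h1
  · intro h
    rw [h] at h1
    simp only [ofReal_zero, zero_mul] at h1
    exact ⟨hp, (sub_eq_zero.mp h1).symm⟩

lemma conjN {p : ℂ} (hp : p ∈ X.F) : conj (X.N p) = (1 - X.a p) * conj (X.v p) := by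
  rw [N, map_mul, map_add, map_one, conj_of_re (X.hfix p hp.1 hp.2).1, sub_eq_add_neg]

lemma alg1 {p : ℂ} (hp : p ∈ X.F) (z : ℂ) :
    (conj (X.N p) * (z - fderiv ℝ X.τ p z)).re = 2 * (conj (X.N p) * z).re := by
  have h1 := X.hv1 p hp.1
  obtain ⟨h2, h3⟩ := X.hfix p hp.1 hp.2
  have h4 : conj (conj (X.N p) * (fderiv ℝ X.τ p z + z)) = - (conj (X.N p) * (fderiv ℝ X.τ p z + z)) := by
    rw [X.conjN hp, h3]
    simp only [map_mul, map_add, map_sub, map_one, map_pow, conj_conj, conj_of_re h2]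
    linear_combination ((1 - X.a p) * (1 + X.a p)) * (- X.v p * conj z - conj (X.v p) * z) * h1
  have h5 := congrArg Complex.re h4
  rw [Complex.conj_re, Complex.neg_re, mul_add, Complex.add_re] at h5
  rw [mul_sub, Complex.sub_re]
  linarith

/-- vectors fixed by the derivative are real multiples of `I * N` -/
lemma alg2 {p : ℂ} (hp : p ∈ X.F) {z : ℂ} (hz : fderiv ℝ X.τ p z = z) :
    ∃ y : ℝ, z = y * (I * X.N p) := by
  have h1 := X.hv1 p hp.1
  obtain ⟨h2, h3⟩ := X.hfix p hp.1 hp.2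
  have hne := one_add_ne h2
  have hN := X.N_ne hp
  rw [h3] at hz
  have hc : conj (z / (I * X.N p)) = z / (I * X.N p) := by
    have hN' : conj (X.N p) ≠ 0 := (map_ne_zero _).mpr hN
    rw [map_div₀, map_mul, conj_I, div_eq_div_iff (by simp [hN]) (by simp [hN]), X.conjN hp]
    rw [N]
    have : X.v p ≠ 0 := X.v_ne hp.1
    linear_combination (-(I * conj (X.v p))) * hz - (I * (1 + X.a p) * X.v p * conj z) * h1
  refine ⟨(z / (I * X.N p)).re, ?_⟩
  rw [Complex.conj_eq_iff_re.mp hc, div_mul_cancel₀]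
  simp [hN]

/-- `I * N` is fixed by the derivative -/
lemma alg3 {p : ℂ} (hp : p ∈ X.F) : fderiv ℝ X.τ p (I * X.N p) = I * X.N p := by
  have h1 := X.hv1 p hp.1
  obtain ⟨h2, h3⟩ := X.hfix p hp.1 hp.2
  rw [h3, map_mul, conj_I, X.conjN hp, N]
  linear_combination (I * (1 + X.a p) * (1 - X.a p) * X.v p) * h1

lemma sd {p : ℂ} (hp : p ∈ ball (0 : ℂ) 1) : HasStrictFDerivAt X.τ (fderiv ℝ X.τ p) p :=
  sdiff X.hs hp

/-- chart map -/
noncomputable def G (c q : ℂ) : ℂ :=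
  (((conj c * (q - X.τ q)).re / 2 : ℝ) : ℂ) + ((conj c * q).im : ℂ) * I

lemma chart {p : ℂ} (hp : p ∈ X.F) : ∃ (U : Set ℂ) (r : ℝ) (S : ℂ → ℂ), IsOpen U ∧ 0 < r ∧
    U ⊆ ball 0 1 ∧ p ∈ U ∧ ContinuousOn (X.G (X.N p)) U ∧
    MapsTo (X.G (X.N p)) U (ball (X.G (X.N p) p) r) ∧
    MapsTo S (ball (X.G (X.N p) p) r) U ∧
    (∀ q ∈ U, S (X.G (X.N p) q) = q) ∧
    (∀ y ∈ ball (X.G (X.N p) p) r, X.G (X.N p) (S y) = y) ∧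
    (∀ y ∈ ball (X.G (X.N p) p) r, DifferentiableAt ℝ S y) ∧
    (∀ q ∈ U, 0 < (conj (X.N p) * X.v q).re) ∧
    (∀ q ∈ U, 0 < (conj (X.N p) * X.N q).re) := by
  set c := conj (X.N p) with hc
  have hcne : c ≠ 0 := (map_ne_zero _).mpr (X.N_ne hp)
  have hb : ball (0 : ℂ) 1 ∈ 𝓝 p := isOpen_ball.mem_nhds hp.1
  have hτ : ContDiffAt ℝ 1 X.τ p := X.hs.contDiffAt hb
  have hG : ContDiffAt ℝ 1 (X.G (X.N p)) p := by
    have h1 : ContDiffAt ℝ 1 (fun q => reCLM (conj (X.N p) * (q - X.τ q))) p :=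
      reCLM.contDiff.contDiffAt.comp p (contDiffAt_const.mul (contDiffAt_id.sub hτ))
    have h2 : ContDiffAt ℝ 1 (fun q => imCLM (conj (X.N p) * q)) p :=
      imCLM.contDiff.contDiffAt.comp p (contDiffAt_const.mul contDiffAt_id)
    exact ((ofRealCLM.contDiff.contDiffAt.comp p (h1.div_const 2)).add
      ((ofRealCLM.contDiff.contDiffAt.comp p h2).mul contDiffAt_const))
  let e : ℂ ≃L[ℝ] ℂ :=
    ((LinearEquiv.smulOfNeZero ℂ ℂ c hcne).restrictScalars ℝ).toContinuousLinearEquiv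
  have he : ∀ z, e z = c * z := fun z => rfl
  have hG' : HasFDerivAt (X.G (X.N p)) (e : ℂ →L[ℝ] ℂ) p := by
    have hd := (X.sd hp.1).hasFDerivAt
    have h0 : HasFDerivAt (fun q => c * (q - X.τ q))
        (c • (ContinuousLinearMap.id ℝ ℂ - fderiv ℝ X.τ p)) p :=
      ((hasFDerivAt_id p).sub hd).const_mul c
    have h1 := (reCLM.hasFDerivAt.comp p h0).mul_const (1 / 2 : ℝ)
    have h2 := imCLM.hasFDerivAt.comp p ((hasFDerivAt_id (𝕜 := ℝ) p).const_mul c)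
    have h3 := (ofRealCLM.hasFDerivAt.comp p h1).add
      ((ofRealCLM.hasFDerivAt.comp p h2).mul_const I)
    refine (h3.congr_fderiv ?_).congr_of_eventuallyEq ?_
    · refine ContinuousLinearMap.ext fun z => ?_
      have h4 := X.alg1 hp z
      rw [← hc] at h4
      apply Complex.ext
      · simp at h4 ⊢
        rw [he, Complex.mul_re]
        linarith
      · simp
        rw [he, Complex.mul_im]
    · refine Eventually.of_forall fun q => ?_
      simp [G, ← hc]
      ring
  have h10 : (1 : WithTop ℕ∞) ≠ 0 := one_ne_zero
  let E := hG.toOpenPartialHomeomorph (X.G (X.N p)) hG' h10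
  have hEc : ∀ q, E q = X.G (X.N p) q := fun q => rfl
  have hpE : p ∈ E.source := hG.mem_toOpenPartialHomeomorph_source hG' h10
  have hpT : X.G (X.N p) p ∈ E.target := hG.image_mem_toOpenPartialHomeomorph_target hG' h10
  have hsymm : ContDiffAt ℝ 1 E.symm (X.G (X.N p) p) := hG.to_localInverse hG' h10
  have hdiff : ∀ᶠ y in 𝓝 (X.G (X.N p) p), DifferentiableAt ℝ E.symm y := by
    filter_upwards [hsymm.eventually (by simp)] with y hy
    exact hy.differentiableAt h10
  have hEp : E.symm (X.G (X.N p) p) = p := E.left_inv hpE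
  have hvc : ContinuousAt (fun q => (c * X.v q).re) p :=
    Complex.continuous_re.continuousAt.comp (continuousAt_const.mul (X.hv.continuousAt hb))
  have hNc : ContinuousAt (fun q => (c * X.N q).re) p :=
    Complex.continuous_re.continuousAt.comp (continuousAt_const.mul (X.N_cont.continuousAt hb))
  have hv0 : 0 < (c * X.v p).re := by
    rw [hc, X.conjN hp, mul_assoc, mul_comm (conj _), X.hv1 p hp.1]
    simp [(X.hfix p hp.1 hp.2).1]
  have hN0 : 0 < (c * X.N p).re := by
    rw [hc, mul_comm, Complex.mul_conj]
    simpa using X.N_ne hp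
  have hO : ∀ᶠ q in 𝓝 p, q ∈ ball (0 : ℂ) 1 ∧ 0 < (c * X.v q).re ∧ 0 < (c * X.N q).re :=
    (eventually_mem_nhds_iff.mpr hb |>.mono fun q hq => mem_of_mem_nhds hq).and
      ((hvc.eventually_const_lt hv0).and (hNc.eventually_const_lt hN0))
  have hO' : ∀ᶠ y in 𝓝 (X.G (X.N p) p), (E.symm y) ∈ ball (0 : ℂ) 1 ∧
      0 < (c * X.v (E.symm y)).re ∧ 0 < (c * X.N (E.symm y)).re := by
    have : Tendsto E.symm (𝓝 (X.G (X.N p) p)) (𝓝 p) := by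
      have := hsymm.continuousAt
      rwa [ContinuousAt, hEp] at this
    exact this.eventually hO
  obtain ⟨r, hr, hball⟩ := Metric.eventually_nhds_iff_ball.mp
    ((hO'.and hdiff).and (E.open_target.mem_nhds hpT))
  have hUU : ∀ q ∈ E.source ∩ E ⁻¹' (ball (X.G (X.N p) p) r),
      E q ∈ ball (X.G (X.N p) p) r ∧ E.symm (E q) = q := fun q hq => ⟨hq.2, E.left_inv hq.1⟩
  refine ⟨E.source ∩ E ⁻¹' (ball (X.G (X.N p) p) r), r, E.symm,
    E.isOpen_inter_preimage isOpen_ball, hr, ?_, ⟨hpE, mem_ball_self hr⟩,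
    E.continuousOn.mono inter_subset_left, fun q hq => hq.2, ?_, fun q hq => E.left_inv hq.1,
    fun y hy => E.right_inv (hball y hy).2, fun y hy => (hball y hy).1.2, ?_, ?_⟩
  · intro q hq
    have := (hball _ (hUU q hq).1).1.1.1
    rwa [(hUU q hq).2] at this
  · intro y hy
    refine ⟨E.map_target (hball y hy).2, ?_⟩
    rw [mem_preimage, E.right_inv (hball y hy).2]
    exact hy
  · intro q hq
    have := (hball _ (hUU q hq).1).1.1.2.1
    rwa [(hUU q hq).2] at this
  · intro q hq
    have := (hball _ (hUU q hq).1).1.1.2.2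
    rwa [(hUU q hq).2] at this

end Dat
end InvArc

namespace InvArc
open Complex ComplexConjugate Filter Topology
namespace Dat
variable (X : Dat)

/-- positive side -/
def A : Set ℂ := {p ∈ ball (0 : ℂ) 1 | 0 < X.h p}

/-- negative side -/
def B : Set ℂ := {p ∈ ball (0 : ℂ) 1 | X.h p < 0}

lemma A_open : IsOpen X.A := X.hh.isOpen_inter_preimage isOpen_ball isOpen_Ioi

lemma B_open : IsOpen X.B := X.hh.isOpen_inter_preimage isOpen_ball isOpen_Iio

lemma τA : X.τ '' X.A = X.B := by
  ext q
  constructor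
  · rintro ⟨p, hp, rfl⟩
    refine ⟨X.hm hp.1, ?_⟩
    rw [X.hodd p hp.1]
    linarith [hp.2]
  · intro hq
    refine ⟨X.τ q, ⟨X.hm hq.1, ?_⟩, X.hi q hq.1⟩
    rw [X.hodd q hq.1]
    linarith [hq.2]

lemma τB : X.τ '' X.B = X.A := by
  rw [← X.τA, image_image]
  ext q
  constructor
  · rintro ⟨p, hp, rfl⟩
    show X.τ (X.τ p) ∈ X.A
    rwa [X.hi p hp.1]
  · intro hq
    exact ⟨q, hq, X.hi q hq.1⟩

lemma τF : X.τ '' X.F = X.F := by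
  ext q
  constructor
  · rintro ⟨p, hp, rfl⟩
    rwa [hp.2]
  · intro hq
    exact ⟨q, hq, hq.2⟩

lemma F_closed : closure X.F ∩ ball 0 1 ⊆ X.F := by
  rintro p ⟨h1, h2⟩
  rw [X.mem_F_iff h2]
  have hc : ContinuousAt X.h p := X.hh.continuousAt (isOpen_ball.mem_nhds h2)
  have : X.h p ∈ closure ({0} : Set ℝ) := by
    refine closure_mono ?_ (hc.continuousWithinAt.mem_closure_image h1)
    rintro _ ⟨q, hq, rfl⟩
    exact (X.mem_F_iff hq.1).mp hq
  simpa using this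

lemma G_re (c : ℂ) {q : ℂ} (hq : q ∈ ball (0 : ℂ) 1) :
    (X.G c q).re = X.h q * ((conj c * X.v q).re / 2) := by
  rw [G, X.hf q hq]
  simp
  ring

lemma G_im (c q : ℂ) : (X.G c q).im = (conj c * q).im := by
  simp [G]

lemma local_side {p : ℂ} (hp : p ∈ X.F) :
    (∃ U, IsOpen U ∧ p ∈ U ∧ IsPreconnected (U ∩ X.A)) ∧ p ∈ closure X.A := by
  obtain ⟨U, r, S, hU, hr, hUb, hpU, hGc, hGm, hSm, hSG, hGS, hSd, hv, -⟩ := X.chart hp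
  have h0 : (X.G (X.N p) p).re = 0 := by
    rw [X.G_re _ hp.1, (X.mem_F_iff hp.1).mp hp, zero_mul]
  have hre : ∀ q ∈ U, (0 < (X.G (X.N p) q).re ↔ 0 < X.h q) := by
    intro q hq
    rw [X.G_re _ (hUb hq)]
    exact mul_pos_iff_of_pos_right (half_pos (hv q hq))
  have hSc : ContinuousOn S (ball (X.G (X.N p) p) r) :=
    fun y hy => (hSd y hy).continuousAt.continuousWithinAt
  have himg : U ∩ X.A = S '' (ball (X.G (X.N p) p) r ∩ {z | 0 < z.re}) := by
    ext q
    constructor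
    · rintro ⟨h1, h2⟩
      exact ⟨_, ⟨hGm h1, (hre q h1).mpr h2.2⟩, hSG q h1⟩
    · rintro ⟨y, ⟨hy1, hy2⟩, rfl⟩
      refine ⟨hSm hy1, hUb (hSm hy1), ?_⟩
      rw [← hre _ (hSm hy1), hGS y hy1]
      exact hy2
  refine ⟨⟨U, hU, hpU, ?_⟩, ?_⟩
  · rw [himg]
    exact (((convex_ball _ _).inter (convex_halfSpace_re_gt 0)).isPreconnected).image _
      (hSc.mono inter_subset_left)
  · have h1 : X.G (X.N p) p ∈ closure (ball (X.G (X.N p) p) r ∩ {z | 0 < z.re}) := by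
      have ht : Tendsto (fun t : ℝ => X.G (X.N p) p + t) (𝓝[>] 0) (𝓝 (X.G (X.N p) p)) := by
        have : Continuous (fun t : ℝ => X.G (X.N p) p + t) := by fun_prop
        have := this.tendsto 0
        simp only [ofReal_zero, add_zero] at this
        exact this.mono_left nhdsWithin_le_nhds
      refine mem_closure_of_tendsto ht ?_
      filter_upwards [ht.eventually (isOpen_ball.mem_nhds (mem_ball_self hr)),
        self_mem_nhdsWithin] with t h1 h2
      refine ⟨h1, ?_⟩
      simpa [h0] using h2
    have h2 := (hSc _ (mem_ball_self hr)).mono inter_subset_left |>.mem_closure_image h1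
    rw [← himg, hSG p hpU] at h2
    exact closure_mono inter_subset_right h2

/-- auxiliary open set for the connectedness of `A` -/
def W (u : Set ℂ) : Set ℂ := {p ∈ ball (0 : ℂ) 1 | (0 < X.h p ∧ p ∈ u) ∨ (X.h p < 0 ∧ X.τ p ∈ u) ∨
  (X.h p = 0 ∧ ∀ᶠ q in 𝓝 p, 0 < X.h q → q ∈ u)}

lemma τc {p : ℂ} (hp : p ∈ ball (0 : ℂ) 1) : ContinuousAt X.τ p := (X.sd hp).continuousAt

lemma hc {p : ℂ} (hp : p ∈ ball (0 : ℂ) 1) : ContinuousAt X.h p :=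
  X.hh.continuousAt (isOpen_ball.mem_nhds hp)

lemma W_open {u : Set ℂ} (hu : IsOpen u) : IsOpen (X.W u) := by
  rw [isOpen_iff_mem_nhds]
  rintro p ⟨hp, h⟩
  have hb : ∀ᶠ q in 𝓝 p, q ∈ ball (0 : ℂ) 1 := isOpen_ball.mem_nhds hp
  rcases h with ⟨h1, h2⟩ | ⟨h1, h2⟩ | ⟨h1, h2⟩
  · filter_upwards [hb, (X.hc hp).eventually_const_lt h1, hu.mem_nhds h2] with q q1 q2 q3
    exact ⟨q1, Or.inl ⟨q2, q3⟩⟩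
  · filter_upwards [hb, (X.hc hp).eventually_lt_const h1, (X.τc hp).eventually (hu.mem_nhds h2)]
      with q q1 q2 q3
    exact ⟨q1, Or.inr (Or.inl ⟨q2, q3⟩)⟩
  · have hf := ((X.mem_F_iff hp).mpr h1).2
    have h3 : ∀ᶠ q in 𝓝 p, 0 < X.h (X.τ q) → X.τ q ∈ u := by
      have := X.τc hp
      rw [ContinuousAt, hf] at this
      exact this.eventually h2
    filter_upwards [hb, h2, h3, eventually_eventually_nhds.mpr h2] with q q1 q2 q3 q4
    refine ⟨q1, ?_⟩
    rcases lt_trichotomy (X.h q) 0 with h | h | h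
    · right; left
      refine ⟨h, q3 ?_⟩
      rw [X.hodd q q1]
      linarith
    · exact Or.inr (Or.inr ⟨h, q4⟩)
    · exact Or.inl ⟨h, q2 h⟩

lemma A_pre : IsPreconnected X.A := by
  rw [isPreconnected_iff_subset_of_disjoint]
  intro u v hu hv hc hd
  have hAc : ∀ p ∈ ball (0 : ℂ) 1, 0 < X.h p → p ∈ u ∨ p ∈ v := fun p hp h => hc ⟨hp, h⟩
  have hAd : ∀ p ∈ ball (0 : ℂ) 1, 0 < X.h p → p ∈ u → p ∈ v → False := fun p hp h h1 h2 => by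
    have : p ∈ X.A ∩ (u ∩ v) := ⟨⟨hp, h⟩, h1, h2⟩
    rw [hd] at this
    exact this
  have hpos : ∀ p ∈ ball (0 : ℂ) 1, X.h p < 0 → 0 < X.h (X.τ p) := fun p hp h => by
    rw [X.hodd p hp]; linarith
  have hb := isPreconnected_iff_subset_of_disjoint.mp ball_pc (X.W u) (X.W v) (X.W_open hu)
    (X.W_open hv) ?_ ?_
  · have hfin : ∀ w, ball (0 : ℂ) 1 ⊆ X.W w → X.A ⊆ w := by
      intro w hw p hp
      rcases (hw hp.1).2 with h | h | h
      · exact h.2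
      · linarith [hp.2, h.1]
      · linarith [hp.2, h.1]
    exact hb.imp (hfin u) (hfin v)
  · intro p hp
    rcases lt_trichotomy (X.h p) 0 with h | h | h
    · rcases hAc _ (X.hm hp) (hpos p hp h) with h' | h'
      · exact Or.inl ⟨hp, Or.inr (Or.inl ⟨h, h'⟩)⟩
      · exact Or.inr ⟨hp, Or.inr (Or.inl ⟨h, h'⟩)⟩
    · obtain ⟨⟨U, hU, hpU, hpre⟩, -⟩ := X.local_side ((X.mem_F_iff hp).mpr h)
      have hev : ∀ w, U ∩ X.A ⊆ w → p ∈ X.W w := by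
        intro w hw
        refine ⟨hp, Or.inr (Or.inr ⟨h, ?_⟩)⟩
        filter_upwards [hU.mem_nhds hpU, isOpen_ball.mem_nhds hp] with q q1 q2 q3
        exact hw ⟨q1, q2, q3⟩
      refine (isPreconnected_iff_subset_of_disjoint.mp hpre u v hu hv
        (inter_subset_right.trans hc) ?_).imp (hev u) (hev v)
      exact subset_eq_empty (inter_subset_inter_left _ inter_subset_right) hd
    · rcases hAc p hp h with h' | h'
      · exact Or.inl ⟨hp, Or.inl ⟨h, h'⟩⟩
      · exact Or.inr ⟨hp, Or.inl ⟨h, h'⟩⟩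
  · rw [eq_empty_iff_forall_notMem]
    rintro p ⟨hp, ⟨-, h1⟩, ⟨-, h2⟩⟩
    rcases lt_trichotomy (X.h p) 0 with h | h | h
    · have e1 : X.τ p ∈ u := by
        rcases h1 with h1 | h1 | h1
        · linarith [h1.1]
        · exact h1.2
        · linarith [h1.1]
      have e2 : X.τ p ∈ v := by
        rcases h2 with h1 | h1 | h1
        · linarith [h1.1]
        · exact h1.2
        · linarith [h1.1]
      exact hAd _ (X.hm hp) (hpos p hp h) e1 e2
    · have e1 : ∀ᶠ q in 𝓝 p, 0 < X.h q → q ∈ u := by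
        rcases h1 with h1 | h1 | h1
        · linarith [h1.1]
        · linarith [h1.1]
        · exact h1.2
      have e2 : ∀ᶠ q in 𝓝 p, 0 < X.h q → q ∈ v := by
        rcases h2 with h1 | h1 | h1
        · linarith [h1.1]
        · linarith [h1.1]
        · exact h1.2
      obtain ⟨-, hcl⟩ := X.local_side ((X.mem_F_iff hp).mpr h)
      obtain ⟨q, q1, q2, q3⟩ :=
        ((mem_closure_iff_frequently.mp hcl).and_eventually (e1.and e2)).exists
      exact hAd q q1.1 q1.2 (q2 q1.2) (q3 q1.2)
    · have e1 : p ∈ u := by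
        rcases h1 with h1 | h1 | h1
        · exact h1.2
        · linarith [h1.1]
        · linarith [h1.1]
      have e2 : p ∈ v := by
        rcases h2 with h1 | h1 | h1
        · exact h1.2
        · linarith [h1.1]
        · linarith [h1.1]
      exact hAd p hp h e1 e2

lemma F_ne : X.F.Nonempty := by
  obtain ⟨p, hp, h⟩ := exists_fixed X.τ X.hs.continuousOn X.hm X.hi
  exact ⟨p, hp, h⟩

lemma A_conn : IsConnected X.A := by
  refine ⟨?_, X.A_pre⟩
  obtain ⟨p, hp⟩ := X.F_ne
  exact closure_nonempty_iff.mp ⟨p, (X.local_side hp).2⟩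

lemma B_conn : IsConnected X.B := by
  rw [← X.τA]
  exact X.A_conn.image _ (X.hs.continuousOn.mono fun p hp => hp.1)

lemma AF_pre : IsPreconnected {p ∈ ball (0 : ℂ) 1 | 0 ≤ X.h p} := by
  refine X.A_pre.subset_closure (fun p hp => ⟨hp.1, hp.2.le⟩) ?_
  rintro p ⟨hp, h⟩
  rcases h.eq_or_lt with h | h
  · exact (X.local_side ((X.mem_F_iff hp).mpr h.symm)).2
  · exact subset_closure ⟨hp, h⟩

lemma τAF : X.τ '' {p ∈ ball (0 : ℂ) 1 | 0 ≤ X.h p} = {p ∈ ball (0 : ℂ) 1 | X.h p ≤ 0} := by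
  ext q
  constructor
  · rintro ⟨p, hp, rfl⟩
    refine ⟨X.hm hp.1, ?_⟩
    rw [X.hodd p hp.1]
    linarith [hp.2]
  · intro hq
    refine ⟨X.τ q, ⟨X.hm hq.1, ?_⟩, X.hi q hq.1⟩
    rw [X.hodd q hq.1]
    linarith [hq.2]

lemma BF_pre : IsPreconnected {p ∈ ball (0 : ℂ) 1 | X.h p ≤ 0} := by
  rw [← X.τAF]
  exact X.AF_pre.image _ (X.hs.continuousOn.mono fun p hp => hp.1)

lemma F_conn : IsConnected X.F := by
  refine ⟨X.F_ne, ?_⟩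
  rw [isPreconnected_iff_subset_of_disjoint]
  intro u v hu hv hc hd
  by_contra! hcon
  obtain ⟨hnu, hnv⟩ := hcon
  obtain ⟨p₁, hp₁, hp₁v⟩ := not_subset.mp hnv
  obtain ⟨p₂, hp₂, hp₂u⟩ := not_subset.mp hnu
  let D := ball (0 : ℂ) 1
  have hhc : Continuous (fun x : D => X.h x) := continuousOn_iff_continuous_domRestrict.mp X.hh
  have hFc : IsClosed {x : D | X.h x = 0} := isClosed_eq hhc continuous_const
  have hC : ∀ w : Set ℂ, IsOpen w → IsClosed ({x : D | X.h x = 0} ∩ {x : D | (x : ℂ) ∉ w}) :=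
    fun w hw => hFc.inter (hw.preimage continuous_subtype_val).isClosed_compl
  have hdis : Disjoint ({x : D | X.h x = 0} ∩ {x : D | (x : ℂ) ∉ v})
      ({x : D | X.h x = 0} ∩ {x : D | (x : ℂ) ∉ u}) := by
    rw [Set.disjoint_left]
    rintro x ⟨h1, h2⟩ ⟨-, h3⟩
    rcases hc ((X.mem_F_iff x.2).mpr h1) with h | h
    · exact h3 h
    · exact h2 h
  obtain ⟨f, hf0, hf1, -⟩ := exists_continuous_zero_one_of_isClosed (hC v hv) (hC u hu) hdis
  classical
  let k : D → ℝ := fun x => f x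
  have hk : Continuous k := f.continuous
  let g' : D → ℂ := fun x => if 0 ≤ X.h x then exp (Real.pi * k x * I) else exp (-(Real.pi * k x * I))
  have hg'c : Continuous g' := by
    refine Continuous.if_le (by fun_prop) (by fun_prop) continuous_const hhc ?_
    intro x hx
    have hxF : (x : ℂ) ∈ X.F := (X.mem_F_iff x.2).mpr hx.symm
    by_cases hxv : (x : ℂ) ∈ v
    · have hxu : (x : ℂ) ∉ u := fun hxu => by
        have : (x : ℂ) ∈ X.F ∩ (u ∩ v) := ⟨hxF, hxu, hxv⟩
        rw [hd] at this
        exact this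
      have : k x = 1 := hf1 ⟨hx.symm, hxu⟩
      simp [this, exp_neg]
    · have : k x = 0 := hf0 ⟨hx.symm, hxv⟩
      simp [this]
  let g : ℂ → ℂ := fun z => if hz : z ∈ D then g' ⟨z, hz⟩ else 1
  let K : ℂ → ℝ := fun z => if hz : z ∈ D then k ⟨z, hz⟩ else 1
  have hKk : ∀ x : D, K x = k x := fun x => by simp [K]
  have hKc : ContinuousOn K D := by
    rw [continuousOn_iff_continuous_domRestrict]
    convert hk using 1
    ext x
    exact hKk x
  have hg : ∀ z ∈ D, g z = if 0 ≤ X.h z then exp (Real.pi * K z * I) else exp (-(Real.pi * K z * I)) := by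
    intro z hz
    have : g z = g' ⟨z, hz⟩ := dif_pos hz
    rw [this, show K z = k ⟨z, hz⟩ from dif_pos hz]
  have hgc : ContinuousOn g D := by
    rw [continuousOn_iff_continuous_domRestrict]
    convert hg'c using 1
    ext x
    exact dif_pos x.2
  obtain ⟨θ, hθc, hθ⟩ := exists_continuousOn_eqOn_exp_comp ball_sc isOpen_ball hgc (by
    rintro ⟨p, hp, h⟩
    rw [hg p hp] at h
    split_ifs at h <;> exact exp_ne_zero _ h)
  have hKcc : ContinuousOn (fun z => Real.pi * (K z : ℂ) * I) D :=
    (continuousOn_const.mul (Complex.continuous_ofReal.comp_continuousOn hKc)).mul continuousOn_const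
  have hp₁0 := (X.mem_F_iff hp₁.1).mp hp₁
  have hp₂0 := (X.mem_F_iff hp₂.1).mp hp₂
  have hK1 : K p₁ = 0 := (hKk ⟨p₁, hp₁.1⟩).trans (hf0 ⟨hp₁0, hp₁v⟩)
  have hK2 : K p₂ = 1 := (hKk ⟨p₂, hp₂.1⟩).trans (hf1 ⟨hp₂0, hp₂u⟩)
  have hA := log_const X.AF_pre (φ := fun z => θ z - Real.pi * (K z : ℂ) * I) (c := 1)
    ((hθc.sub hKcc).mono fun p hp => hp.1) (fun z hz => by
      have : exp (θ z) = g z := hθ hz.1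
      rw [exp_sub, this, hg z hz.1, if_pos hz.2, div_self (exp_ne_zero _)])
    (x := p₁) (y := p₂) ⟨hp₁.1, hp₁0.ge⟩ ⟨hp₂.1, hp₂0.ge⟩
  have hB := log_const X.BF_pre (φ := fun z => θ z + Real.pi * (K z : ℂ) * I) (c := 1)
    ((hθc.add hKcc).mono fun p hp => hp.1) (fun z hz => by
      have : exp (θ z) = g z := hθ hz.1
      rw [exp_add, this, hg z hz.1]
      split_ifs with h
      · have h0 : X.h z = 0 := le_antisymm hz.2 h
        have hzF := (X.mem_F_iff hz.1).mpr h0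
        have : K z = 0 ∨ K z = 1 := by
          by_cases hzv : z ∈ v
          · right
            refine (hKk ⟨z, hz.1⟩).trans (hf1 ⟨h0, fun hzu => ?_⟩)
            have : z ∈ X.F ∩ (u ∩ v) := ⟨hzF, hzu, hzv⟩
            rw [hd] at this
            exact this
          · exact Or.inl ((hKk ⟨z, hz.1⟩).trans (hf0 ⟨h0, hzv⟩))
        rcases this with h | h <;> simp [h]
      · rw [← exp_add]
        simp)
    (x := p₁) (y := p₂) ⟨hp₁.1, hp₁0.le⟩ ⟨hp₂.1, hp₂0.le⟩
  simp only [hK1, hK2] at hA hB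
  have : (Real.pi : ℂ) * I = 0 := by
    push_cast at hA hB
    linear_combination (hA - hB) / 2
  simp at this

/-- the annulus is connected -/
lemma annulus_pre (r : ℝ) (hr : 0 ≤ r) : IsPreconnected {z : ℂ | r < ‖z‖ ∧ ‖z‖ < 1} := by
  have : {z : ℂ | r < ‖z‖ ∧ ‖z‖ < 1} =
      (fun x : ℝ × ℝ => (x.1 : ℂ) * exp (x.2 * I)) '' (Ioo r 1 ×ˢ univ) := by
    ext z
    constructor
    · intro hz
      exact ⟨(‖z‖, arg z), ⟨hz, mem_univ _⟩, norm_mul_exp_arg_mul_I z⟩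
    · rintro ⟨⟨s, t⟩, ⟨hs, -⟩, rfl⟩
      have hs' : 0 < s := hr.trans_lt hs.1
      simp only [mem_ofPred_eq, norm_mul, norm_exp_ofReal_mul_I, mul_one, Complex.norm_real,
        Real.norm_of_nonneg hs'.le]
      exact hs
  rw [this]
  exact (isPreconnected_Ioo.prod isPreconnected_univ).image _ (by fun_prop)

lemma ball_not_compact : ¬ IsCompact (ball (0 : ℂ) 1) := by
  intro h
  have h1 := h.isClosed.closure_eq
  rw [closure_ball _ one_ne_zero] at h1
  have : (1 : ℂ) ∈ ball (0 : ℂ) 1 := by rw [← h1]; simp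
  simp at this

lemma F_noncompact : ¬ IsCompact X.F := by
  intro hF
  obtain ⟨r, hr0, hr1, hr⟩ : ∃ r, 0 ≤ r ∧ r < 1 ∧ ∀ p ∈ X.F, ‖p‖ ≤ r := by
    obtain ⟨p, hp, hmax⟩ := hF.exists_isMaxOn X.F_ne continuous_norm.continuousOn
    exact ⟨‖p‖, norm_nonneg _, by simpa using hp.1, fun q hq => hmax hq⟩
  have hRb : {z : ℂ | r < ‖z‖ ∧ ‖z‖ < 1} ⊆ ball 0 1 := fun z hz => by simpa using hz.2
  have hcb : closedBall (0 : ℂ) r ⊆ ball 0 1 := closedBall_subset_ball hr1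
  have hne : ∀ z ∈ {z : ℂ | r < ‖z‖ ∧ ‖z‖ < 1}, X.h z ≠ 0 := by
    intro z hz h
    have := hr z ((X.mem_F_iff (hRb hz)).mpr h)
    linarith [hz.1]
  have hτc := X.hs.continuousOn
  have fin : ∀ K : Set ℂ, IsCompact K → K ⊆ ball 0 1 →
      (∀ p ∈ ball (0 : ℂ) 1, p ∈ K ∨ X.τ p ∈ K) → False := by
    intro K hK hKb hcov
    apply ball_not_compact
    have : ball (0 : ℂ) 1 = K ∪ X.τ '' K := by
      ext p
      constructor
      · intro hp
        rcases hcov p hp with h | h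
        · exact Or.inl h
        · exact Or.inr ⟨_, h, X.hi p hp⟩
      · rintro (h | ⟨q, hq, rfl⟩)
        · exact hKb h
        · exact X.hm (hKb hq)
    rw [this]
    exact hK.union (hK.image_of_continuousOn (hτc.mono hKb))
  have hcomp : ∀ s : Set ℝ, IsClosed s → IsCompact (closedBall (0 : ℂ) r ∩ X.h ⁻¹' s) := by
    intro s hs
    have := (X.hh.mono hcb).preimage_isClosed_of_isClosed isClosed_closedBall hs
    exact (isCompact_closedBall (0 : ℂ) r).of_isClosed_subset this inter_subset_left
  have hsign : (∀ z ∈ {z : ℂ | r < ‖z‖ ∧ ‖z‖ < 1}, 0 < X.h z) ∨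
      (∀ z ∈ {z : ℂ | r < ‖z‖ ∧ ‖z‖ < 1}, X.h z < 0) := by
    by_contra! hcon
    obtain ⟨⟨x, hx, hx'⟩, ⟨y, hy, hy'⟩⟩ := hcon
    obtain ⟨z, hz, hz'⟩ := (annulus_pre r hr0).intermediate_value hx hy (X.hh.mono hRb) ⟨hx', hy'⟩
    exact hne z hz hz'
  have hin : ∀ p ∈ ball (0 : ℂ) 1, ¬ (r < ‖p‖ ∧ ‖p‖ < 1) → p ∈ closedBall (0 : ℂ) r := by
    intro p hp h
    rw [mem_ball_zero_iff] at hp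
    rw [mem_closedBall_zero_iff]
    by_contra! h'
    exact h ⟨h', hp⟩
  rcases hsign with hsg | hsg
  · refine fin _ (hcomp (Iic 0) isClosed_Iic) (inter_subset_left.trans hcb) fun p hp => ?_
    have key : ∀ q ∈ ball (0 : ℂ) 1, X.h q ≤ 0 → q ∈ closedBall (0 : ℂ) r ∩ X.h ⁻¹' Iic 0 :=
      fun q hq h => ⟨hin q hq fun h' => by linarith [hsg q h'], h⟩
    rcases le_total (X.h p) 0 with h | h
    · exact Or.inl (key p hp h)
    · exact Or.inr (key _ (X.hm hp) (by rw [X.hodd p hp]; linarith))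
  · refine fin _ (hcomp (Ici 0) isClosed_Ici) (inter_subset_left.trans hcb) fun p hp => ?_
    have key : ∀ q ∈ ball (0 : ℂ) 1, 0 ≤ X.h q → q ∈ closedBall (0 : ℂ) r ∩ X.h ⁻¹' Ici 0 :=
      fun q hq h => ⟨hin q hq fun h' => by linarith [hsg q h'], h⟩
    rcases le_total 0 (X.h p) with h | h
    · exact Or.inl (key p hp h)
    · exact Or.inr (key _ (X.hm hp) (by rw [X.hodd p hp]; linarith))

end Dat
end InvArc

namespace InvArc
open Complex ComplexConjugate Filter Topology

/-- A flow box around `p` for a field `V` along `F`. -/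
def HasBox (F : Set ℂ) (V : ℂ → ℂ) (p : ℂ) : Prop :=
  ∃ (U : Set ℂ) (ε : ℝ) (σ : ℂ → ℝ) (c : ℝ → ℂ), IsOpen U ∧ p ∈ U ∧ 0 < ε ∧ c 0 = p ∧
    (∀ q ∈ U ∩ F, σ q ∈ Ioo (-ε) ε ∧ c (σ q) = q ∧
      ∃ σ' : ℂ →L[ℝ] ℝ, HasFDerivAt σ σ' q ∧ σ' (V q) = 1) ∧
    (∀ t ∈ Ioo (-ε) ε, c t ∈ U ∩ F ∧ HasDerivAt c (V (c t)) t ∧ σ (c t) = t)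

namespace Dat
variable (X : Dat)

lemma box {p : ℂ} (hp : p ∈ X.F) : HasBox X.F (fun q => I * X.N q) p := by
  obtain ⟨U, r, S, hU, hr, hUb, hpU, hGc, hGm, hSm, hSG, hGS, hSd, hv, hN⟩ := X.chart hp
  set n := X.N p with hn
  set s : ℂ → ℝ := fun q => (conj n * q).im with hs
  set x₀ : ℝ := s p with hx₀
  have hG0 : ∀ q ∈ U ∩ X.F, X.G n q = (s q : ℂ) * I := by
    rintro q ⟨hq, hqF⟩
    apply Complex.ext
    · rw [X.G_re _ (hUb hq), (X.mem_F_iff (hUb hq)).mp hqF]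
      simp
    · rw [X.G_im]
      simp [hs]
  have hGp : X.G n p = (x₀ : ℂ) * I := hG0 p ⟨hpU, hp⟩
  rw [hGp] at hGm hSm hGS hSd
  have hxb : ∀ x ∈ Ioo (x₀ - r) (x₀ + r), (x : ℂ) * I ∈ ball ((x₀ : ℂ) * I) r := by
    intro x hx
    rw [mem_ball, dist_eq_norm, ← sub_mul, norm_mul, norm_I, mul_one, ← ofReal_sub,
      Complex.norm_real, Real.norm_eq_abs, abs_lt]
    constructor <;> linarith [hx.1, hx.2]
  set c₀ : ℝ → ℂ := fun x => S ((x : ℂ) * I) with hc₀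
  have hcU : ∀ x ∈ Ioo (x₀ - r) (x₀ + r), c₀ x ∈ U ∩ X.F := by
    intro x hx
    have h1 := hSm (hxb x hx)
    refine ⟨h1, (X.mem_F_iff (hUb h1)).mpr ?_⟩
    have h2 := congrArg Complex.re (hGS _ (hxb x hx))
    rw [X.G_re _ (hUb h1)] at h2
    simp only [Complex.mul_re, ofReal_re, I_re, mul_zero, ofReal_im, I_im, mul_one, sub_zero,
      mul_eq_zero] at h2
    rcases h2 with h2 | h2
    · exact h2
    · have := hv _ h1
      rw [Complex.mul_re] at this
      linarith
  have hsc : ∀ x ∈ Ioo (x₀ - r) (x₀ + r), s (c₀ x) = x := by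
    intro x hx
    have h2 := congrArg Complex.im (hGS _ (hxb x hx))
    rw [X.G_im] at h2
    exact h2.trans (by simp)
  set w : ℝ → ℝ := fun x => (conj n * X.N (c₀ x)).re with hw
  have hwpos : ∀ x ∈ Ioo (x₀ - r) (x₀ + r), 0 < w x := fun x hx => hN _ (hcU x hx).1
  have hcd : ∀ x ∈ Ioo (x₀ - r) (x₀ + r), HasDerivAt c₀ (((w x)⁻¹ : ℝ) * (I * X.N (c₀ x))) x := by
    intro x hx
    have hlin : HasDerivAt (fun x : ℝ => (x : ℂ) * I) (1 * I) x :=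
      (ofRealCLM.hasDerivAt (x := x)).mul_const I
    obtain ⟨z, hz⟩ : ∃ z, HasDerivAt c₀ z x :=
      ⟨_, (hSd _ (hxb x hx)).hasFDerivAt.comp_hasDerivAt x hlin⟩
    have hnear : ∀ᶠ y in 𝓝 x, y ∈ Ioo (x₀ - r) (x₀ + r) := isOpen_Ioo.mem_nhds hx
    have h1 : HasDerivAt (X.τ ∘ c₀) (fderiv ℝ X.τ (c₀ x) z) x :=
      (X.sd (hUb (hcU x hx).1)).hasFDerivAt.comp_hasDerivAt x hz
    have h2 : fderiv ℝ X.τ (c₀ x) z = z := by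
      refine (h1.congr_of_eventuallyEq ?_).unique hz
      filter_upwards [hnear] with y hy
      exact (hcU y hy).2.2.symm
    obtain ⟨y, hy⟩ := X.alg2 (hcU x hx).2 h2
    have h3 : HasDerivAt (fun x => s (c₀ x)) ((conj n * z).im) x :=
      imCLM.hasFDerivAt.comp_hasDerivAt x (hz.const_mul (conj n))
    have h4 : (conj n * z).im = 1 := by
      refine (h3.congr_of_eventuallyEq ?_).unique (hasDerivAt_id x)
      filter_upwards [hnear] with y hy
      exact (hsc y hy).symm
    have h5 : y * w x = 1 := by
      rw [← h4, hy, hw]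
      simp
      ring
    rw [hy] at hz
    rwa [eq_inv_of_mul_eq_one_left h5] at hz
  have hcc : ContinuousOn c₀ (Ioo (x₀ - r) (x₀ + r)) :=
    fun x hx => (hcd x hx).continuousAt.continuousWithinAt
  have hwc : ContinuousOn w (Ioo (x₀ - r) (x₀ + r)) :=
    Complex.continuous_re.comp_continuousOn (continuousOn_const.mul
      (X.N_cont.comp hcc fun x hx => hUb (hcU x hx).1))
  set cl : ℝ → ℝ := fun x => max (x₀ - r / 2) (min (x₀ + r / 2) x) with hcl
  have hclc : Continuous cl := by fun_prop
  have hclm : ∀ x, cl x ∈ Ioo (x₀ - r) (x₀ + r) := by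
    intro x
    constructor
    · exact lt_of_lt_of_le (by linarith) (le_max_left _ _)
    · refine max_lt (by linarith) (lt_of_le_of_lt (min_le_left _ _) (by linarith))
  have hcle : ∀ x ∈ Ioo (x₀ - r / 2) (x₀ + r / 2), cl x = x := by
    intro x hx
    rw [hcl]
    simp only
    rw [min_eq_right hx.2.le, max_eq_right hx.1.le]
  set k : ℝ → ℝ := fun x => (w (cl x))⁻¹ with hk
  have hkpos : ∀ x, 0 < k x := fun x => inv_pos.mpr (hwpos _ (hclm x))
  have hkc : Continuous k := by
    refine Continuous.inv₀ (hwc.comp_continuous hclc hclm) fun x => (hwpos _ (hclm x)).ne'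
  set P : ℝ → ℝ := fun x => ∫ t in x₀..x, k t with hP
  have hPd : ∀ x, HasStrictDerivAt P (k x) x := fun x => hkc.integral_hasStrictDerivAt x₀ x
  have hP0 : P x₀ = 0 := by simp [hP]
  let e := ((hPd x₀).hasStrictFDerivAt_equiv (hkpos x₀).ne').toOpenPartialHomeomorph P
  have heP : ∀ x, e x = P x := fun x => rfl
  have hxs : x₀ ∈ e.source :=
    ((hPd x₀).hasStrictFDerivAt_equiv (hkpos x₀).ne').mem_toOpenPartialHomeomorph_source
  have h0t : (0 : ℝ) ∈ e.target := by
    have := e.map_source hxs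
    rwa [heP, hP0] at this
  have hes0 : e.symm 0 = x₀ := by
    have := e.left_inv hxs
    rwa [heP, hP0] at this
  have hesc : ContinuousAt e.symm 0 := e.symm.continuousAt h0t
  have hev : ∀ᶠ t in 𝓝 (0 : ℝ), e.symm t ∈ Ioo (x₀ - r / 2) (x₀ + r / 2) ∧ t ∈ e.target := by
    refine (hesc.eventually (isOpen_Ioo.mem_nhds ?_)).and (e.open_target.mem_nhds h0t)
    rw [hes0]
    constructor <;> linarith
  obtain ⟨ε, hε, hεb⟩ := Metric.eventually_nhds_iff_ball.mp hev
  rw [Real.ball_eq_Ioo, zero_sub, zero_add] at hεb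
  have hsub : ∀ x ∈ Ioo (x₀ - r / 2) (x₀ + r / 2), x ∈ Ioo (x₀ - r) (x₀ + r) :=
    fun x hx => ⟨by linarith [hx.1], by linarith [hx.2]⟩
  have hscont : Continuous s := by fun_prop
  refine ⟨U ∩ s ⁻¹' (e.source ∩ e ⁻¹' Ioo (-ε) ε), ε, fun q => P (s q), fun t => c₀ (e.symm t),
    hU.inter ((e.isOpen_inter_preimage isOpen_Ioo).preimage hscont), ⟨hpU, hxs, ?_⟩, hε, ?_, ?_, ?_⟩
  · rw [mem_preimage, heP, hP0]
    constructor <;> linarith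
  · show c₀ (e.symm 0) = p
    rw [hes0, hc₀]
    simp only
    rw [← hGp, hSG p hpU]
  · rintro q ⟨⟨hqU, hq1, hq2⟩, hqF⟩
    have hls : e.symm (P (s q)) = s q := e.left_inv hq1
    have hsq : s q ∈ Ioo (x₀ - r / 2) (x₀ + r / 2) := by
      have := (hεb _ hq2).1
      rwa [heP, hls] at this
    have hcq : c₀ (s q) = q := by
      rw [hc₀]
      simp only
      rw [← hG0 q ⟨hqU, hqF⟩, hSG q hqU]
    refine ⟨hq2, ?_, ?_⟩
    · show c₀ (e.symm (P (s q))) = q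
      rw [hls, hcq]
    · have hsd : HasFDerivAt s (imCLM.comp (conj n • ContinuousLinearMap.id ℝ ℂ)) q :=
        imCLM.hasFDerivAt.comp q ((hasFDerivAt_id (𝕜 := ℝ) q).const_mul (conj n))
      refine ⟨_, (hPd (s q)).hasDerivAt.comp_hasFDerivAt q hsd, ?_⟩
      have hkq : k (s q) * (conj n * X.N q).re = 1 := by
        rw [hk]
        simp only
        rw [hcle _ hsq, hw]
        simp only
        rw [hcq]
        exact inv_mul_cancel₀ (hN q hqU).ne'
      rw [← hkq]
      simp
  · intro t ht
    obtain ⟨h1, h2⟩ := hεb t ht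
    have h3 := hsub _ h1
    have h4 := hcU _ h3
    have h5 : s (c₀ (e.symm t)) = e.symm t := hsc _ h3
    have h6 : P (e.symm t) = t := e.right_inv h2
    refine ⟨⟨⟨h4.1, ?_⟩, h4.2⟩, ?_, ?_⟩
    · rw [mem_preimage, h5]
      refine ⟨e.map_target h2, ?_⟩
      rw [mem_preimage, heP, h6]
      exact ht
    · have hd := e.hasDerivAt_symm h2 (hkpos _).ne' (hPd (e.symm t)).hasDerivAt
      have hd2 := (hcd _ h3).scomp t hd
      refine hd2.congr_deriv ?_
      rw [hk]
      simp only
      rw [hcle _ h1, inv_inv, real_smul, ← mul_assoc, ← ofReal_mul,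
        mul_inv_cancel₀ (hwpos _ h3).ne']
      simp
    · show P (s (c₀ (e.symm t))) = t
      rw [h5, h6]

end Dat
end InvArc

namespace InvArc
open Complex ComplexConjugate Filter Topology

/-- `γ` is an integral curve of `V` inside `F` on `I`. -/
def Sol (F : Set ℂ) (V : ℂ → ℂ) (γ : ℝ → ℂ) (I : Set ℝ) : Prop :=
  ∀ t ∈ I, γ t ∈ F ∧ HasDerivAt γ (V (γ t)) t

/-- The properties of a flow box. -/
def BoxP (F : Set ℂ) (V : ℂ → ℂ) (U : Set ℂ) (ε : ℝ) (σ : ℂ → ℝ) (c : ℝ → ℂ) : Prop :=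
    (∀ q ∈ U ∩ F, σ q ∈ Ioo (-ε) ε ∧ c (σ q) = q ∧
      ∃ σ' : ℂ →L[ℝ] ℝ, HasFDerivAt σ σ' q ∧ σ' (V q) = 1) ∧
    (∀ t ∈ Ioo (-ε) ε, c t ∈ U ∩ F ∧ HasDerivAt c (V (c t)) t ∧ σ (c t) = t)

lemma germ {F : Set ℂ} {V : ℂ → ℂ} {U : Set ℂ} {ε : ℝ} {σ : ℂ → ℝ} {c : ℝ → ℂ}
    (hU : IsOpen U) (hb : BoxP F V U ε σ c) {γ : ℝ → ℂ} {I : Set ℝ} (hI : IsOpen I)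
    (hγ : Sol F V γ I) {t : ℝ} (ht : t ∈ I) (htU : γ t ∈ U) :
    ∃ δ > 0, ∀ s ∈ Ioo (t - δ) (t + δ), s ∈ I ∧ γ s = c (σ (γ t) + (s - t)) := by
  have hev : ∀ᶠ s in 𝓝 t, s ∈ I ∧ γ s ∈ U :=
    (hI.eventually_mem ht).and ((hγ t ht).2.continuousAt.eventually_mem (hU.mem_nhds htU))
  obtain ⟨δ, hδ, hδb⟩ := Metric.eventually_nhds_iff_ball.mp hev
  rw [Real.ball_eq_Ioo] at hδb
  refine ⟨δ, hδ, fun s hs => ⟨(hδb s hs).1, ?_⟩⟩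
  have hd : ∀ s ∈ Ioo (t - δ) (t + δ), HasDerivAt (fun s => σ (γ s) - s) 0 s := by
    intro s hs
    obtain ⟨h1, h2⟩ := hδb s hs
    obtain ⟨-, -, σ', h3, h4⟩ := hb.1 (γ s) ⟨h2, (hγ s h1).1⟩
    have h5 := (h3.comp_hasDerivAt s (hγ s h1).2).sub (hasDerivAt_id s)
    rw [h4, sub_self] at h5
    exact h5
  have hc := isOpen_Ioo.is_const_of_deriv_eq_zero isPreconnected_Ioo
    (fun s hs => (hd s hs).differentiableAt.differentiableWithinAt)
    (fun s hs => (hd s hs).deriv) hs (y := t) ⟨by linarith, by linarith⟩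
  obtain ⟨h1, h2⟩ := hδb s hs
  have h3 : σ (γ t) + (s - t) = σ (γ s) := by linarith
  rw [h3, (hb.1 (γ s) ⟨h2, (hγ s h1).1⟩).2.1]

lemma Sol.uniq {F : Set ℂ} {V : ℂ → ℂ} (hbox : ∀ p ∈ F, HasBox F V p) {γ₁ γ₂ : ℝ → ℂ} {I : Set ℝ}
    (hI : IsOpen I) (hI2 : I.OrdConnected) (h1 : Sol F V γ₁ I) (h2 : Sol F V γ₂ I) {t₀ : ℝ}
    (ht₀ : t₀ ∈ I) (he : γ₁ t₀ = γ₂ t₀) : ∀ t ∈ I, γ₁ t = γ₂ t := by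
  have hc1 : ContinuousOn γ₁ I := fun t ht => (h1 t ht).2.continuousAt.continuousWithinAt
  have hc2 : ContinuousOn γ₂ I := fun t ht => (h2 t ht).2.continuousAt.continuousWithinAt
  have hsub : I ⊆ {t | t ∈ I ∧ γ₁ t = γ₂ t} := by
    refine hI2.isPreconnected.subset_of_closure_inter_subset ?_ ⟨t₀, ht₀, ht₀, he⟩ ?_
    · rw [isOpen_iff_mem_nhds]
      rintro t ⟨ht, hte⟩
      obtain ⟨U, ε, σ, c, hU, hpU, hε, -, hb⟩ := hbox _ (h1 t ht).1
      obtain ⟨δ₁, hδ₁, hg₁⟩ := germ hU hb hI h1 ht hpU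
      obtain ⟨δ₂, hδ₂, hg₂⟩ := germ hU hb hI h2 ht (hte ▸ hpU)
      filter_upwards [Ioo_mem_nhds (show t - δ₁ < t by linarith) (show t < t + δ₁ by linarith),
        Ioo_mem_nhds (show t - δ₂ < t by linarith) (show t < t + δ₂ by linarith)] with s hs1 hs2
      refine ⟨(hg₁ s hs1).1, ?_⟩
      rw [(hg₁ s hs1).2, (hg₂ s hs2).2, hte]
    · rintro t ⟨htc, ht⟩
      refine ⟨ht, ?_⟩
      have hcl : IsClosed {s : I | γ₁ s = γ₂ s} :=
        isClosed_eq (continuousOn_iff_continuous_domRestrict.mp hc1)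
          (continuousOn_iff_continuous_domRestrict.mp hc2)
      by_contra hne
      have hn : ∀ᶠ s in 𝓝 t, γ₁ s ≠ γ₂ s :=
        (((h1 t ht).2.continuousAt).ne_iff_eventually_ne ((h2 t ht).2.continuousAt)).mp hne
      obtain ⟨s, hs1, hs2⟩ := mem_closure_iff_nhds.mp htc _ hn
      exact hs1 hs2.2
  exact fun t ht => (hsub ht).2

lemma maximal {F : Set ℂ} {V : ℂ → ℂ} (hbox : ∀ p ∈ F, HasBox F V p) {p₀ : ℂ} (hp₀ : p₀ ∈ F) :
    ∃ (J : Set ℝ) (γ : ℝ → ℂ), IsOpen J ∧ J.OrdConnected ∧ J.Nonempty ∧ Sol F V γ J ∧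
      ∀ (I : Set ℝ) (δ : ℝ → ℂ) (t : ℝ), IsOpen I → I.OrdConnected → t ∈ I → t ∈ J →
        Sol F V δ I → δ t = γ t → I ⊆ J := by
  classical
  set J : Set ℝ := {t | ∃ (I : Set ℝ) (δ : ℝ → ℂ), IsOpen I ∧ I.OrdConnected ∧ 0 ∈ I ∧ t ∈ I ∧
    Sol F V δ I ∧ δ 0 = p₀} with hJ
  have hex : ∀ t : ℝ, ∃ (I : Set ℝ) (δ : ℝ → ℂ), t ∈ J → IsOpen I ∧ I.OrdConnected ∧ 0 ∈ I ∧
      t ∈ I ∧ Sol F V δ I ∧ δ 0 = p₀ := by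
    intro t
    by_cases ht : t ∈ J
    · obtain ⟨I, δ, h⟩ := ht
      exact ⟨I, δ, fun _ => h⟩
    · exact ⟨∅, 0, fun h => absurd h ht⟩
  choose I Γ hIΓ using hex
  set γ : ℝ → ℂ := fun t => Γ t t with hγ
  have hsubJ : ∀ (I' : Set ℝ) (δ : ℝ → ℂ), IsOpen I' → I'.OrdConnected → 0 ∈ I' → Sol F V δ I' →
      δ 0 = p₀ → I' ⊆ J ∧ ∀ t ∈ I', γ t = δ t := by
    intro I' δ ho hoc h0 hs hd
    have hsub : I' ⊆ J := fun t ht => ⟨I', δ, ho, hoc, h0, ht, hs, hd⟩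
    refine ⟨hsub, fun t ht => ?_⟩
    obtain ⟨g1, g2, g3, g4, g5, g6⟩ := hIΓ t (hsub ht)
    exact Sol.uniq hbox (ho.inter g1) (hoc.inter g2) (fun s hs' => g5 s hs'.2)
      (fun s hs' => hs s hs'.1) ⟨h0, g3⟩ (g6.trans hd.symm) t ⟨ht, g4⟩
  have hJo : IsOpen J := by
    rw [isOpen_iff_mem_nhds]
    intro t ht
    obtain ⟨g1, g2, g3, g4, g5, g6⟩ := hIΓ t ht
    exact mem_of_superset (g1.mem_nhds g4) (hsubJ _ _ g1 g2 g3 g5 g6).1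
  have hSol : Sol F V γ J := by
    intro t ht
    obtain ⟨g1, g2, g3, g4, g5, g6⟩ := hIΓ t ht
    have he := (hsubJ _ _ g1 g2 g3 g5 g6).2
    have h1 := g5 t g4
    rw [he t g4]
    refine ⟨h1.1, h1.2.congr_of_eventuallyEq ?_⟩
    filter_upwards [g1.mem_nhds g4] with s hs using he s hs
  have h0J : (0 : ℝ) ∈ J ∧ γ 0 = p₀ := by
    obtain ⟨U, ε, σ, c, hU, hpU, hε, hc0, hb⟩ := hbox _ hp₀
    have h0 : (0 : ℝ) ∈ Ioo (-ε) ε := ⟨by linarith, hε⟩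
    have h := hsubJ (Ioo (-ε) ε) c isOpen_Ioo ordConnected_Ioo h0
      (fun t ht => ⟨(hb.2 t ht).1.2, (hb.2 t ht).2.1⟩) hc0
    exact ⟨h.1 h0, (h.2 0 h0).trans hc0⟩
  have hJoc : J.OrdConnected := by
    have : IsPreconnected J := by
      refine isPreconnected_of_forall 0 fun t ht => ?_
      obtain ⟨g1, g2, g3, g4, g5, g6⟩ := hIΓ t ht
      exact ⟨I t, (hsubJ _ _ g1 g2 g3 g5 g6).1, g3, g4, g2.isPreconnected⟩
    exact this.ordConnected
  refine ⟨J, γ, hJo, hJoc, ⟨0, h0J.1⟩, hSol, ?_⟩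
  intro K δ t hK hKoc htK htJ hδ he
  have hag : ∀ s ∈ J ∩ K, γ s = δ s := Sol.uniq hbox (hJo.inter hK) (hJoc.inter hKoc)
    (fun s hs => hSol s hs.1) (fun s hs => hδ s hs.2) ⟨htJ, htK⟩ he.symm
  set μ : ℝ → ℂ := fun s => if s ∈ J then γ s else δ s with hμ
  have hμJ : ∀ s ∈ J, μ s = γ s := fun s hs => if_pos hs
  have hμK : ∀ s ∈ K, μ s = δ s := by
    intro s hs
    by_cases h : s ∈ J
    · rw [hμJ s h, hag s ⟨h, hs⟩]
    · exact if_neg h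
  have hμs : Sol F V μ (J ∪ K) := by
    rintro s (hs | hs)
    · rw [hμJ s hs]
      refine ⟨(hSol s hs).1, (hSol s hs).2.congr_of_eventuallyEq ?_⟩
      filter_upwards [hJo.mem_nhds hs] with x hx using hμJ x hx
    · rw [hμK s hs]
      refine ⟨(hδ s hs).1, (hδ s hs).2.congr_of_eventuallyEq ?_⟩
      filter_upwards [hK.mem_nhds hs] with x hx using hμK x hx
  have := hsubJ (J ∪ K) μ (hJo.union hK)
    (IsPreconnected.union t htJ htK hJoc.isPreconnected hKoc.isPreconnected).ordConnected
    (Or.inl h0J.1) hμs ((hμJ 0 h0J.1).trans h0J.2)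
  exact subset_union_right.trans this.1

lemma conn_eq {F S : Set ℂ} (hF : IsPreconnected F) (hSF : S ⊆ F) (hne : S.Nonempty)
    (h1 : ∀ q ∈ S, ∃ U, IsOpen U ∧ q ∈ U ∧ U ∩ F ⊆ S)
    (h2 : ∀ q ∈ F, q ∉ S → ∃ U, IsOpen U ∧ q ∈ U ∧ U ∩ S = ∅) : S = F := by
  refine hSF.antisymm fun q hq => ?_
  by_contra hqS
  obtain ⟨p, hp⟩ := hne
  obtain ⟨x, hx, ⟨U, ⟨hU1, hU2⟩, hxU⟩, ⟨W, ⟨hW1, hW2⟩, hxW⟩⟩ :=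
    hF (⋃₀ {U | IsOpen U ∧ U ∩ F ⊆ S}) (⋃₀ {U | IsOpen U ∧ U ∩ S = ∅})
    (isOpen_sUnion fun U hU => hU.1) (isOpen_sUnion fun U hU => hU.1) (by
      intro x hx
      by_cases hxS : x ∈ S
      · obtain ⟨U, a, b, c⟩ := h1 x hxS
        exact Or.inl ⟨U, ⟨a, c⟩, b⟩
      · obtain ⟨U, a, b, c⟩ := h2 x hx hxS
        exact Or.inr ⟨U, ⟨a, c⟩, b⟩)
    (by
      obtain ⟨U, a, b, c⟩ := h1 p hp
      exact ⟨p, hSF hp, U, ⟨a, c⟩, b⟩)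
    (by
      obtain ⟨U, a, b, c⟩ := h2 q hq hqS
      exact ⟨q, hq, U, ⟨a, c⟩, b⟩)
  have : x ∈ W ∩ S := ⟨hxW, hU2 ⟨hxU, hx⟩⟩
  rw [hW2] at this
  exact this

lemma surj {F : Set ℂ} {V : ℂ → ℂ} (hF : IsPreconnected F) (hbox : ∀ p ∈ F, HasBox F V p)
    {J : Set ℝ} {γ : ℝ → ℂ} (hJn : J.Nonempty) (hγ : Sol F V γ J)
    (hmax : ∀ (I : Set ℝ) (δ : ℝ → ℂ) (t : ℝ), IsOpen I → I.OrdConnected → t ∈ I → t ∈ J →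
        Sol F V δ I → δ t = γ t → I ⊆ J) : γ '' J = F := by
  have key : ∀ (U : Set ℂ) (ε : ℝ) (σ : ℂ → ℝ) (c : ℝ → ℂ), BoxP F V U ε σ c → ∀ t ∈ J, γ t ∈ U →
      U ∩ F ⊆ γ '' J := by
    intro U ε σ c hb t ht htU
    set u := σ (γ t) with hu
    have hut := hb.1 (γ t) ⟨htU, (hγ t ht).1⟩
    have hsol : Sol F V (fun s => c (s + (u - t))) (Ioo (-ε - (u - t)) (ε - (u - t))) := by
      intro s hs
      have h1 := hb.2 (s + (u - t)) ⟨by linarith [hs.1], by linarith [hs.2]⟩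
      refine ⟨h1.1.2, ?_⟩
      exact h1.2.1.comp_add_const s (u - t)
    have htI : t ∈ Ioo (-ε - (u - t)) (ε - (u - t)) :=
      ⟨by linarith [hut.1.1], by linarith [hut.1.2]⟩
    have he : c (t + (u - t)) = γ t := by
      rw [add_sub_cancel]
      exact hut.2.1
    have hsub := hmax _ _ t isOpen_Ioo ordConnected_Ioo htI ht hsol he
    have heq := Sol.uniq hbox isOpen_Ioo ordConnected_Ioo hsol (fun s hs => hγ s (hsub hs)) htI he
    intro q hq
    have hqb := hb.1 q hq
    have hm : σ q - (u - t) ∈ Ioo (-ε - (u - t)) (ε - (u - t)) :=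
      ⟨by linarith [hqb.1.1], by linarith [hqb.1.2]⟩
    refine ⟨σ q - (u - t), hsub hm, ?_⟩
    rw [← heq _ hm, sub_add_cancel, hqb.2.1]
  refine conn_eq hF ?_ (hJn.image _) ?_ ?_
  · rintro _ ⟨t, ht, rfl⟩
    exact (hγ t ht).1
  · rintro _ ⟨t, ht, rfl⟩
    obtain ⟨U, ε, σ, c, hU, hpU, hε, -, hb⟩ := hbox _ (hγ t ht).1
    exact ⟨U, hU, hpU, key U ε σ c hb t ht hpU⟩
  · intro q hq hqn
    obtain ⟨U, ε, σ, c, hU, hpU, hε, -, hb⟩ := hbox _ hq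
    refine ⟨U, hU, hpU, ?_⟩
    rw [eq_empty_iff_forall_notMem]
    rintro _ ⟨hx, t, ht, rfl⟩
    exact hqn (key U ε σ c hb t ht hx ⟨hpU, hq⟩)

lemma op {F : Set ℂ} {V : ℂ → ℂ} (hbox : ∀ p ∈ F, HasBox F V p)
    {J : Set ℝ} {γ : ℝ → ℂ} (hJ : IsOpen J) (hγ : Sol F V γ J) {t : ℝ} (ht : t ∈ J) {W : Set ℝ}
    (hW : W ∈ 𝓝 t) : ∃ U, IsOpen U ∧ γ t ∈ U ∧ U ∩ F ⊆ γ '' W := by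
  obtain ⟨U, ε, σ, c, hU, hpU, hε, -, hb⟩ := hbox _ (hγ t ht).1
  obtain ⟨δ, hδ, hg⟩ := germ hU hb hJ hγ ht hpU
  obtain ⟨-, -, σ', hσ', -⟩ := hb.1 (γ t) ⟨hpU, (hγ t ht).1⟩
  have hev : ∀ᶠ q in 𝓝 (γ t), t + (σ q - σ (γ t)) ∈ W ∩ Ioo (t - δ) (t + δ) := by
    have : ContinuousAt (fun q => t + (σ q - σ (γ t))) (γ t) :=
      continuousAt_const.add (hσ'.continuousAt.sub continuousAt_const)
    refine this.eventually_mem ?_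
    rw [sub_self, add_zero]
    exact inter_mem hW (Ioo_mem_nhds (by linarith) (by linarith))
  obtain ⟨U', hU'1, hU'2, hU'3⟩ := _root_.eventually_nhds_iff.mp (hev.and (hU.eventually_mem hpU))
  refine ⟨U', hU'2, hU'3, fun q hq => ?_⟩
  obtain ⟨h1, h2⟩ := hU'1 q hq.1
  refine ⟨_, h1.1, ?_⟩
  rw [(hg _ h1.2).2]
  convert (hb.1 q ⟨h2, hq.2⟩).2.1 using 2
  ring

lemma inj {F : Set ℂ} {V : ℂ → ℂ} (hF : IsPreconnected F) (hnc : ¬ IsCompact F)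
    (hbox : ∀ p ∈ F, HasBox F V p)
    {J : Set ℝ} {γ : ℝ → ℂ} (hJ : IsOpen J) (hJo : J.OrdConnected)
    (hγ : Sol F V γ J) : InjOn γ J := by
  have key : ∀ t₁ ∈ J, ∀ t₂ ∈ J, t₁ < t₂ → γ t₁ ≠ γ t₂ := by
    intro t₁ h₁ t₂ h₂ hlt he
    apply hnc
    have hIJ : Icc t₁ t₂ ⊆ J := hJo.out h₁ h₂
    have hcomp : IsCompact (γ '' Icc t₁ t₂) := isCompact_Icc.image_of_continuousOn
      fun t ht => (hγ t (hIJ ht)).2.continuousAt.continuousWithinAt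
    obtain ⟨δ, hδ, hper⟩ : ∃ δ > 0, ∀ u ∈ Ioo (-δ) δ, γ (t₁ + u) = γ (t₂ + u) := by
      obtain ⟨U, ε, σ, c, hU, hpU, hε, -, hb⟩ := hbox _ (hγ t₁ h₁).1
      obtain ⟨δ₁, hδ₁, hg₁⟩ := germ hU hb hJ hγ h₁ hpU
      obtain ⟨δ₂, hδ₂, hg₂⟩ := germ hU hb hJ hγ h₂ (he ▸ hpU)
      refine ⟨min δ₁ δ₂, lt_min hδ₁ hδ₂, fun u hu => ?_⟩
      have ha := min_le_left δ₁ δ₂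
      have hb' := min_le_right δ₁ δ₂
      rw [(hg₁ (t₁ + u) ⟨by linarith [hu.1], by linarith [hu.2]⟩).2,
        (hg₂ (t₂ + u) ⟨by linarith [hu.1], by linarith [hu.2]⟩).2, he]
      congr 2
      ring
    have hend : ∃ U, IsOpen U ∧ γ t₁ ∈ U ∧ U ∩ F ⊆ γ '' Icc t₁ t₂ := by
      obtain ⟨U, hU, hUm, hUs⟩ := op hbox hJ hγ h₁ (W := Ioo (t₁ - min δ (t₂ - t₁))
        (t₁ + min δ (t₂ - t₁))) (by
          have : 0 < min δ (t₂ - t₁) := lt_min hδ (by linarith)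
          exact Ioo_mem_nhds (by linarith) (by linarith))
      refine ⟨U, hU, hUm, fun q hq => ?_⟩
      obtain ⟨s, hs, rfl⟩ := hUs hq
      have ha := min_le_left δ (t₂ - t₁)
      have hb := min_le_right δ (t₂ - t₁)
      rcases le_or_gt t₁ s with h | h
      · exact ⟨s, ⟨h, by linarith [hs.2]⟩, rfl⟩
      · refine ⟨t₂ + (s - t₁), ⟨by linarith [hs.1], by linarith⟩, ?_⟩
        rw [← hper (s - t₁) ⟨by linarith [hs.1], by linarith⟩]
        congr 1
        ring
    rw [← conn_eq hF (S := γ '' Icc t₁ t₂) ?_ ⟨γ t₁, t₁, ⟨le_rfl, hlt.le⟩, rfl⟩ ?_ ?_]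
    · exact hcomp
    · rintro _ ⟨t, ht, rfl⟩
      exact (hγ t (hIJ ht)).1
    · rintro _ ⟨t, ht, rfl⟩
      rcases eq_or_lt_of_le ht.1 with h | h
      · rw [← h]
        exact hend
      rcases eq_or_lt_of_le ht.2 with h' | h'
      · rw [h', ← he]
        exact hend
      exact op hbox hJ hγ (hIJ ht) (Icc_mem_nhds h h')
    · intro q hq hqn
      exact ⟨(γ '' Icc t₁ t₂)ᶜ, hcomp.isClosed.isOpen_compl, hqn, compl_inter_self _⟩
  intro t₁ h₁ t₂ h₂ he
  rcases lt_trichotomy t₁ t₂ with h | h | h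
  · exact absurd he (key _ h₁ _ h₂ h)
  · exact h
  · exact absurd he.symm (key _ h₂ _ h₁ h)

lemma reparam {J : Set ℝ} (hJ : IsOpen J) (hJo : J.OrdConnected) (hJn : J.Nonempty) :
    ∃ φ φ' : ℝ → ℝ, (∀ x, HasDerivAt φ (φ' x) x) ∧ Continuous φ' ∧ (∀ x, 0 < φ' x) ∧
      range φ = J := by
  have huniv : ∃ φ φ' : ℝ → ℝ, (∀ x, HasDerivAt φ (φ' x) x) ∧ Continuous φ' ∧ (∀ x, 0 < φ' x) ∧
      range φ = univ := ⟨id, fun _ => 1, fun x => hasDerivAt_id x, continuous_const,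
        fun _ => one_pos, range_id⟩
  have hIoi : ∀ a : ℝ, ∃ φ φ' : ℝ → ℝ, (∀ x, HasDerivAt φ (φ' x) x) ∧ Continuous φ' ∧
      (∀ x, 0 < φ' x) ∧ range φ = Ioi a := by
    intro a
    refine ⟨fun x => a + Real.exp x, Real.exp, fun x => (Real.hasDerivAt_exp x).const_add a,
      Real.continuous_exp, Real.exp_pos, ?_⟩
    ext y
    constructor
    · rintro ⟨x, rfl⟩
      simp [Real.exp_pos]
    · intro hy
      refine ⟨Real.log (y - a), ?_⟩
      simp only
      rw [Real.exp_log (sub_pos.mpr hy)]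
      ring
  have hIio : ∀ b : ℝ, ∃ φ φ' : ℝ → ℝ, (∀ x, HasDerivAt φ (φ' x) x) ∧ Continuous φ' ∧
      (∀ x, 0 < φ' x) ∧ range φ = Iio b := by
    intro b
    refine ⟨fun x => b - Real.exp (-x), fun x => Real.exp (-x), fun x => ?_,
      by fun_prop, fun x => Real.exp_pos _, ?_⟩
    · have := ((hasDerivAt_neg x).exp).const_sub b
      simpa using this
    ext y
    constructor
    · rintro ⟨x, rfl⟩
      simp [Real.exp_pos]
    · intro hy
      refine ⟨-Real.log (b - y), ?_⟩
      simp only [neg_neg]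
      rw [Real.exp_log (sub_pos.mpr hy)]
      ring
  have hIoo : ∀ a b : ℝ, a < b → ∃ φ φ' : ℝ → ℝ, (∀ x, HasDerivAt φ (φ' x) x) ∧ Continuous φ' ∧
      (∀ x, 0 < φ' x) ∧ range φ = Ioo a b := by
    intro a b hab
    have hpos : ∀ x : ℝ, 0 < 1 + Real.exp x := fun x => by positivity
    refine ⟨fun x => b - (b - a) * (1 + Real.exp x)⁻¹,
      fun x => (b - a) * (Real.exp x / (1 + Real.exp x) ^ 2), fun x => ?_, ?_, fun x => ?_, ?_⟩
    · have := (((((Real.hasDerivAt_exp x).const_add 1).inv (hpos x).ne').const_mul (b - a))).const_sub b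
      refine this.congr_deriv ?_
      ring
    · refine continuous_const.mul (Real.continuous_exp.div (by fun_prop) fun x => ?_)
      exact (pow_pos (hpos x) 2).ne'
    · have := hpos x
      have := sub_pos.mpr hab
      positivity
    ext y
    constructor
    · rintro ⟨x, rfl⟩
      have h1 : (1 + Real.exp x)⁻¹ < 1 := inv_lt_one_of_one_lt₀ (by linarith [Real.exp_pos x])
      have h2 := inv_pos.mpr (hpos x)
      have h3 := sub_pos.mpr hab
      constructor
      · simp only
        nlinarith
      · simp only
        nlinarith
    · intro hy
      have h1 := sub_pos.mpr hy.1
      have h2 := sub_pos.mpr hy.2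
      refine ⟨Real.log ((y - a) / (b - y)), ?_⟩
      simp only
      rw [Real.exp_log (by positivity)]
      have h3 : 1 + (y - a) / (b - y) = (b - a) / (b - y) := by
        field_simp
        ring
      have h4 : b - a ≠ 0 := by linarith
      rw [h3, inv_div, mul_div_cancel₀ _ h4]
      ring
  have hinter := hJ.interior_eq
  have hm := hJo.isPreconnected.mem_intervals
  have hIoo' : ∀ a b : ℝ, J = Ioo a b → ∃ φ φ' : ℝ → ℝ, (∀ x, HasDerivAt φ (φ' x) x) ∧
      Continuous φ' ∧ (∀ x, 0 < φ' x) ∧ range φ = J := by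
    intro a b h
    obtain ⟨x, hx⟩ := hJn
    rw [h] at hx ⊢
    exact hIoo a b (hx.1.trans hx.2)
  simp only [mem_insert_iff, mem_singleton_iff] at hm
  rcases hm with h | h | h | h | h | h | h | h | h | h
  · rw [h, interior_Icc, ← h] at hinter
    exact hIoo' _ _ hinter.symm
  · rw [h, interior_Ico, ← h] at hinter
    exact hIoo' _ _ hinter.symm
  · rw [h, interior_Ioc, ← h] at hinter
    exact hIoo' _ _ hinter.symm
  · exact hIoo' _ _ h
  · rw [h, interior_Ici, ← h] at hinter
    rw [← hinter]
    exact hIoi _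
  · rw [h]
    exact hIoi _
  · rw [h, interior_Iic, ← h] at hinter
    rw [← hinter]
    exact hIio _
  · rw [h]
    exact hIio _
  · rw [h]
    exact huniv
  · exact absurd h hJn.ne_empty

/-- A connected noncompact set with flow boxes for a nonvanishing continuous field is an arc. -/
lemma classify {F : Set ℂ} {V : ℂ → ℂ} (hF : IsConnected F) (hnc : ¬ IsCompact F)
    (hV : ContinuousOn V F) (hV0 : ∀ p ∈ F, V p ≠ 0) (hbox : ∀ p ∈ F, HasBox F V p) :
    ∃ γ : ℝ → ℂ, ContDiff ℝ 1 γ ∧ (∀ t : ℝ, deriv γ t ≠ 0) ∧ IsEmbedding γ ∧ range γ = F := by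
  obtain ⟨p₀, hp₀⟩ := hF.nonempty
  obtain ⟨J, γ, hJ, hJo, hJn, hγ, hmax⟩ := maximal hbox hp₀
  have hsurj := surj hF.isPreconnected hbox hJn hγ hmax
  have hinj := inj hF.isPreconnected hnc hbox hJ hJo hγ
  obtain ⟨φ, φ', hφ, hφc, hφp, hφr⟩ := reparam hJ hJo hJn
  have hφJ : ∀ x, φ x ∈ J := fun x => hφr ▸ mem_range_self x
  have hmono : StrictMono φ := strictMono_of_deriv_pos fun x => by rw [(hφ x).deriv]; exact hφp x
  have hd : ∀ x, HasDerivAt (γ ∘ φ) (φ' x • V (γ (φ x))) x :=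
    fun x => (hγ _ (hφJ x)).2.scomp x (hφ x)
  have hcont : Continuous (γ ∘ φ) := continuous_iff_continuousAt.mpr fun x => (hd x).continuousAt
  have hmF : ∀ x, γ (φ x) ∈ F := fun x => (hγ _ (hφJ x)).1
  have hdd : deriv (γ ∘ φ) = fun x => φ' x • V (γ (φ x)) := funext fun x => (hd x).deriv
  refine ⟨γ ∘ φ, ?_, fun x => ?_, ⟨?_, ?_⟩, ?_⟩
  · rw [contDiff_one_iff_deriv]
    refine ⟨fun x => (hd x).differentiableAt, ?_⟩
    rw [hdd]
    exact hφc.smul (hV.comp_continuous hcont hmF)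
  · rw [hdd]
    exact smul_ne_zero (hφp x).ne' (hV0 _ (hmF x))
  · rw [isInducing_iff_nhds]
    intro x
    refine le_antisymm (hcont.continuousAt.tendsto.le_comap) ?_
    intro W hW
    have hst : HasStrictDerivAt φ (φ' x) x :=
      hasStrictDerivAt_of_hasDerivAt_of_continuousAt (Eventually.of_forall hφ) hφc.continuousAt
    have hWφ : φ '' W ∈ 𝓝 (φ x) := by
      rw [← hst.map_nhds_eq (hφp x).ne']
      exact image_mem_map hW
    obtain ⟨U, hU, hUm, hUs⟩ := op hbox hJ hγ (hφJ x) hWφ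
    refine ⟨U, hU.mem_nhds hUm, fun y hy => ?_⟩
    obtain ⟨_, ⟨w, hw, rfl⟩, he⟩ := hUs ⟨hy, hmF y⟩
    rwa [← hmono.injective (hinj (hφJ w) (hφJ y) he)]
  · exact fun x y h => hmono.injective (hinj (hφJ x) (hφJ y) h)
  · rw [range_comp, hφr, hsurj]

end InvArc

namespace InvArc
open Complex ComplexConjugate Filter Topology

/-- The theorem for the unit disk of `ℂ`. -/
lemma complex_version (τ : ℂ → ℂ) (hs : ContDiffOn ℝ 1 τ (ball 0 1))
    (hm : MapsTo τ (ball 0 1) (ball 0 1)) (hi : ∀ p ∈ ball (0 : ℂ) 1, τ (τ p) = p)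
    (ho : ∀ p ∈ ball (0 : ℂ) 1, (fderiv ℝ τ p).det < 0) (F : Set ℂ)
    (hF : F = {p ∈ ball (0 : ℂ) 1 | τ p = p}) :
    IsConnected F ∧ closure F ∩ ball 0 1 ⊆ F ∧
    (∃ γ : ℝ → ℂ, ContDiff ℝ 1 γ ∧ (∀ t : ℝ, deriv γ t ≠ 0) ∧ IsEmbedding γ ∧ range γ = F) ∧
    (∃ A B : Set ℂ, IsOpen A ∧ IsOpen B ∧ IsConnected A ∧ IsConnected B ∧
      Disjoint A B ∧ A ∪ B = ball 0 1 \ F ∧ τ '' A = B ∧ τ '' B = A) := by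
  obtain ⟨v, a, h, h1, h2, h3, h4, h5, h6, h7⟩ := data hs hm hi ho
  let X : Dat := ⟨τ, v, a, h, hs, hm, hi, h1, h2, h3, h4, h5, h6, h7⟩
  have hFX : F = X.F := hF
  subst hFX
  refine ⟨X.F_conn, X.F_closed, ?_, X.A, X.B, X.A_open, X.B_open, X.A_conn, X.B_conn, ?_, ?_,
    X.τA, X.τB⟩
  · refine classify X.F_conn X.F_noncompact
      (continuousOn_const.mul (X.N_cont.mono fun p hp => hp.1))
      (fun p hp => mul_ne_zero I_ne_zero (X.N_ne hp)) (fun p hp => X.box hp)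
  · rw [Set.disjoint_left]
    intro p hp hp'
    exact lt_asymm hp.2 hp'.2
  · ext p
    constructor
    · rintro (hp | hp)
      · exact ⟨hp.1, fun hpF => hp.2.ne' ((X.mem_F_iff hp.1).mp hpF)⟩
      · exact ⟨hp.1, fun hpF => hp.2.ne ((X.mem_F_iff hp.1).mp hpF)⟩
    · rintro ⟨hp, hpF⟩
      rcases lt_trichotomy (X.h p) 0 with hlt | heq | hgt
      · exact Or.inr ⟨hp, hlt⟩
      · exact absurd ((X.mem_F_iff hp).mpr heq) hpF
      · exact Or.inl ⟨hp, hgt⟩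

end InvArc

/-- **Proposition 4.2.** The fixed point set of an orientation-reversing C¹
diffeomorphism involution `τ` of the open unit disk `D ⊂ ℝ²` is a nonempty,
connected, closed (in `D`) one-dimensional C¹ submanifold of `D` homeomorphic
to `ℝ` (a single arc), and `D \ F` consists of exactly two connected
components which are interchanged by `τ`. -/
theorem fixed_point_set_of_orientation_reversing_involution_is_arc
    (τ : EuclideanSpace ℝ (Fin 2) → EuclideanSpace ℝ (Fin 2))
    (D : Set (EuclideanSpace ℝ (Fin 2))) (hD : D = Metric.ball 0 1)
    (hsmooth : ContDiffOn ℝ 1 τ D)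
    (hmaps : Set.MapsTo τ D D)
    (hinv : ∀ p ∈ D, τ (τ p) = p)
    (horient : ∀ p ∈ D, (fderiv ℝ τ p).det < 0)
    (F : Set (EuclideanSpace ℝ (Fin 2))) (hF : F = {p ∈ D | τ p = p}) :
    F.Nonempty ∧ IsConnected F ∧ closure F ∩ D ⊆ F ∧
    (∃ γ : ℝ → EuclideanSpace ℝ (Fin 2),
      ContDiff ℝ 1 γ ∧ (∀ t : ℝ, deriv γ t ≠ 0) ∧
      Topology.IsEmbedding γ ∧ Set.range γ = F) ∧
    (∃ A B : Set (EuclideanSpace ℝ (Fin 2)),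
      IsOpen A ∧ IsOpen B ∧ IsConnected A ∧ IsConnected B ∧
      Disjoint A B ∧ A ∪ B = D \ F ∧ τ '' A = B ∧ τ '' B = A) := by
  let e : ℂ ≃ₗᵢ[ℝ] EuclideanSpace ℝ (Fin 2) := Complex.orthonormalBasisOneI.repr
  have heb : ∀ z : ℂ, e z ∈ D ↔ z ∈ ball (0 : ℂ) 1 := by
    intro z
    rw [hD, mem_ball_zero_iff, mem_ball_zero_iff, e.norm_map]
  have heb' : ∀ p, e.symm p ∈ ball (0 : ℂ) 1 ↔ p ∈ D := by
    intro p
    rw [← heb, e.apply_symm_apply]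
  set T : ℂ → ℂ := fun z => e.symm (τ (e z)) with hT
  have heD : e '' ball 0 1 = D := by
    ext p
    constructor
    · rintro ⟨z, hz, rfl⟩
      exact (heb z).mpr hz
    · intro hp
      exact ⟨e.symm p, (heb' p).mpr hp, e.apply_symm_apply p⟩
  have hDo : IsOpen D := hD ▸ isOpen_ball
  have hTs : ContDiffOn ℝ 1 T (ball 0 1) := by
    refine e.symm.contDiff.comp_contDiffOn (hsmooth.comp e.contDiff.contDiffOn fun z hz => ?_)
    exact (heb z).mpr hz
  have hTm : MapsTo T (ball 0 1) (ball 0 1) := fun z hz =>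
    (heb' _).mpr (hmaps ((heb z).mpr hz))
  have hTi : ∀ p ∈ ball (0 : ℂ) 1, T (T p) = p := by
    intro z hz
    simp only [hT]
    rw [e.apply_symm_apply, hinv _ ((heb z).mpr hz), e.symm_apply_apply]
  have hTo : ∀ p ∈ ball (0 : ℂ) 1, (fderiv ℝ T p).det < 0 := by
    intro z hz
    have hp := (heb z).mpr hz
    have hd : HasFDerivAt τ (fderiv ℝ τ (e z)) (e z) :=
      ((hsmooth.contDiffAt (hDo.mem_nhds hp)).differentiableAt one_ne_zero).hasFDerivAt
    have hd2 : HasFDerivAt T ((e.symm.toContinuousLinearEquiv : _ →L[ℝ] ℂ).comp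
        ((fderiv ℝ τ (e z)).comp (e.toContinuousLinearEquiv : ℂ →L[ℝ] _))) z :=
      e.symm.toContinuousLinearEquiv.hasFDerivAt.comp z
        (hd.comp z e.toContinuousLinearEquiv.hasFDerivAt)
    rw [hd2.fderiv]
    have h3 := LinearMap.det_conj (fderiv ℝ τ (e z) : EuclideanSpace ℝ (Fin 2) →ₗ[ℝ] _)
      e.symm.toLinearEquiv
    have h4 := horient _ hp
    rw [ContinuousLinearMap.det, ← h3] at h4
    exact h4
  obtain ⟨c1, c2, ⟨γ, g1, g2, g3, g4⟩, A, B, hA, hB, hAc, hBc, hdis, hun, hAB, hBA⟩ :=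
    InvArc.complex_version T hTs hTm hTi hTo _ rfl
  set F' : Set ℂ := {p ∈ ball (0 : ℂ) 1 | T p = p} with hF'
  have hFF : e '' F' = F := by
    rw [hF]
    ext p
    constructor
    · rintro ⟨z, ⟨hz, hz2⟩, rfl⟩
      refine ⟨(heb z).mpr hz, ?_⟩
      have := congrArg e hz2
      rwa [hT, e.apply_symm_apply] at this
    · rintro ⟨hp, hp2⟩
      refine ⟨e.symm p, ⟨(heb' p).mpr hp, ?_⟩, e.apply_symm_apply p⟩
      simp only [hT]
      rw [e.apply_symm_apply, hp2]
  have hτe : ∀ S : Set ℂ, τ '' (e '' S) = e '' (T '' S) := by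
    intro S
    rw [image_image, image_image]
    refine image_congr fun z _ => ?_
    simp only [hT]
    rw [e.apply_symm_apply]
  have hFc : IsConnected F := hFF ▸ c1.image e e.continuous.continuousOn
  refine ⟨hFc.nonempty, hFc, ?_, ⟨fun t => e (γ t), ?_, ?_, ?_, ?_⟩, e '' A, e '' B, ?_, ?_, ?_, ?_,
    ?_, ?_, ?_, ?_⟩
  · rw [← hFF, ← heD]
    have h1 : closure (e '' F') = e '' closure F' := (e.toHomeomorph.image_closure F').symm
    rw [h1, ← image_inter e.injective]
    exact image_mono c2
  · exact e.contDiff.comp g1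
  · intro t
    have hd : HasDerivAt γ (deriv γ t) t := (g1.differentiable one_ne_zero t).hasDerivAt
    have hd2 : HasDerivAt (fun t => e (γ t)) (e (deriv γ t)) t :=
      e.toContinuousLinearEquiv.hasFDerivAt.comp_hasDerivAt t hd
    rw [hd2.deriv]
    exact fun h => g2 t (by simpa using h)
  · exact e.toHomeomorph.isEmbedding.comp g3
  · rw [← hFF, ← g4, ← range_comp]
    rfl
  · exact e.toHomeomorph.isOpenMap A hA
  · exact e.toHomeomorph.isOpenMap B hB
  · exact hAc.image e e.continuous.continuousOn
  · exact hBc.image e e.continuous.continuousOn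
  · exact (disjoint_image_iff e.injective).mpr hdis
  · rw [← image_union, hun, image_sdiff e.injective, heD, hFF]
  · rw [hτe, hAB]
  · rw [hτe, hBA]
end

section
/- Let Δ ⊂ ℂ be the open unit disk, and let φ : Δ → Δ × Δ ⊂ ℂ² be an injective holomorphic map whose derivative vanishes nowhere; set D = φ(Δ). Let τ : ℂ² → ℂ² denote coordinatewise complex conjugation, τ(z,w) = (conj z, conj w), and assume τ(D) = D. Then D ∩ ℝ² = {p ∈ D : τ(p) = p} is nonempty and connected (a single real-analytic arc in D). -/
open Metric Set
open Filter Topology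

theorem coord_inverse (f : ℂ → ℂ) (v : ℂ) (hf : AnalyticAt ℂ f v) (hd : deriv f v ≠ 0) :
    ∃ g : ℂ → ℂ, ∀ᶠ z in 𝓝 v, AnalyticAt ℂ g (f z) ∧ g (f z) = z := by
  have h1 := hf.hasStrictDerivAt.eventually_left_inverse hd
  have h2 := hf.analyticAt_localInverse hd
  exact ⟨_, (hf.continuousAt.eventually h2.eventually_analyticAt).and h1⟩

/-- A map `s` of the disk intertwining two injective maps, one an immersion, is holomorphic. -/
theorem change_countable (φ ψ : ℂ → ℂ × ℂ) (s : ℂ → ℂ)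
    (hφ : DifferentiableOn ℂ φ (ball 0 1)) (hψ : DifferentiableOn ℂ ψ (ball 0 1))
    (hφi : InjOn φ (ball 0 1))
    (himm : ∀ z ∈ ball (0 : ℂ) 1, deriv φ z ≠ 0)
    (hs : MapsTo s (ball 0 1) (ball 0 1))
    (h : ∀ z ∈ ball (0 : ℂ) 1, φ (s z) = ψ z) :
    {z ∈ ball (0 : ℂ) 1 | ¬ AnalyticAt ℂ s z}.Countable := by
  have hφa : ∀ z ∈ ball (0 : ℂ) 1, AnalyticAt ℂ φ z := fun z hz =>
    hφ.analyticAt (isOpen_ball.mem_nhds hz)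
  have hψa : ∀ z ∈ ball (0 : ℂ) 1, AnalyticAt ℂ ψ z := fun z hz =>
    hψ.analyticAt (isOpen_ball.mem_nhds hz)
  -- local left inverses
  have key : ∀ v ∈ ball (0 : ℂ) 1, ∃ V ∈ 𝓝 v, ∃ G : ℂ × ℂ → ℂ,
      ∀ z ∈ V, AnalyticAt ℂ G (φ z) ∧ G (φ z) = z := by
    intro v hv
    have ha := hφa v hv
    have hder := ha.differentiableAt.hasDerivAt
    have h1 : HasDerivAt (fun z => (φ z).1) (deriv φ v).1 v := 
      (ContinuousLinearMap.fst ℂ ℂ ℂ).hasFDerivAt.comp_hasDerivAt v hder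
    have h2 : HasDerivAt (fun z => (φ z).2) (deriv φ v).2 v := 
      (ContinuousLinearMap.snd ℂ ℂ ℂ).hasFDerivAt.comp_hasDerivAt v hder
    have hne := himm v hv
    by_cases h0 : (deriv φ v).1 = 0
    · have h0' : (deriv φ v).2 ≠ 0 := fun h => hne (Prod.ext h0 h)
      obtain ⟨g, hg⟩ := coord_inverse (fun z => (φ z).2) v (analyticAt_snd.comp ha)
        (by rwa [h2.deriv])
      exact ⟨_, hg, fun p => g p.2, fun z hz => ⟨AnalyticAt.fun_comp (f := fun p : ℂ × ℂ => p.2) hz.1 analyticAt_snd, hz.2⟩⟩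
    · obtain ⟨g, hg⟩ := coord_inverse (fun z => (φ z).1) v (analyticAt_fst.comp ha)
        (by rwa [h1.deriv])
      exact ⟨_, hg, fun p => g p.1, fun z hz => ⟨AnalyticAt.fun_comp (f := fun p : ℂ × ℂ => p.1) hz.1 analyticAt_fst, hz.2⟩⟩
  choose! V hV G hG using key
  obtain ⟨t, hts, htc, hcov⟩ := TopologicalSpace.countable_cover_nhdsWithin
    (s := ball (0 : ℂ) 1) (f := V) (fun x hx => mem_nhdsWithin_of_mem_nhds (hV x hx))
  have hsub : {z ∈ ball (0 : ℂ) 1 | ¬ AnalyticAt ℂ s z} ⊆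
      ⋃ v ∈ t, {z ∈ ball (0 : ℂ) 1 | s z ∈ V v ∧ ¬ AnalyticAt ℂ s z} := by
    intro z hz
    have := hcov (hs hz.1)
    simp only [mem_iUnion] at this ⊢
    obtain ⟨v, hv, hz'⟩ := this
    exact ⟨v, hv, hz.1, hz', hz.2⟩
  refine Countable.mono hsub (htc.biUnion fun v hv => ?_)
  have hvb := hts hv
  -- the bad points in one piece are isolated
  obtain ⟨t', -, ht'c, hcov'⟩ := TopologicalSpace.countable_cover_nhdsWithin
    (s := {z ∈ ball (0 : ℂ) 1 | s z ∈ V v ∧ ¬ AnalyticAt ℂ s z}) (f := fun z => {z}) (by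
      rintro z ⟨hz, hzV, hzn⟩
      by_contra hcon
      apply hzn
      obtain ⟨hGa, hGe⟩ := hG v hvb _ hzV
      rw [h z hz] at hGa hGe
      have hGψ : AnalyticAt ℂ (fun w => G v (ψ w)) z := AnalyticAt.fun_comp hGa (hψa z hz)
      have hφGψ : AnalyticAt ℂ (fun w => φ (G v (ψ w))) z :=
        AnalyticAt.fun_comp (by rw [hGe]; exact hφa _ (hs hz)) hGψ
      have hfreq : ∃ᶠ w in 𝓝[≠] z, φ (G v (ψ w)) = ψ w := by
        intro hnot
        apply hcon
        rw [eventually_nhdsWithin_iff] at hnot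
        rw [mem_nhdsWithin_iff_eventually]
        filter_upwards [hnot] with w hw hwm
        by_contra hne
        refine hw hne ?_
        have := (hG v hvb _ hwm.2.1).2
        rw [h w hwm.1] at this
        rw [this, h w hwm.1]
      have hev := (hφGψ.frequently_eq_iff_eventually_eq (hψa z hz)).1 hfreq
      refine hGψ.congr ?_
      have hin : ∀ᶠ w in 𝓝 z, G v (ψ w) ∈ ball (0 : ℂ) 1 :=
        hGψ.continuousAt.eventually_mem (isOpen_ball.mem_nhds (by simp only [hGe]; exact hs hz))
      filter_upwards [hev, hin, isOpen_ball.mem_nhds hz] with w h1 h2 h3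
      exact hφi h2 (hs h3) (h1.trans (h w h3).symm))
  refine ht'c.mono (hcov'.trans ?_)
  simp

theorem change_holo (φ ψ : ℂ → ℂ × ℂ) (s : ℂ → ℂ)
    (hφ : DifferentiableOn ℂ φ (ball 0 1)) (hψ : DifferentiableOn ℂ ψ (ball 0 1))
    (hφi : InjOn φ (ball 0 1)) (hψi : InjOn ψ (ball 0 1))
    (himm : ∀ z ∈ ball (0 : ℂ) 1, deriv φ z ≠ 0)
    (hs : MapsTo s (ball 0 1) (ball 0 1))
    (h : ∀ z ∈ ball (0 : ℂ) 1, φ (s z) = ψ z) :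
    DifferentiableOn ℂ s (ball 0 1) := by
  set B := {z ∈ ball (0 : ℂ) 1 | ¬ AnalyticAt ℂ s z} with hB
  have hc : B.Countable := change_countable φ ψ s hφ hψ hφi himm hs h
  rcases B.eq_empty_or_nonempty with he | hne
  · intro z hz
    by_contra hcon
    have : z ∈ B := ⟨hz, fun ha => hcon ha.differentiableAt.differentiableWithinAt⟩
    simp [he] at this
  exfalso
  have hloc : IsLocallyClosed B := by
    have : IsClosed {z | ¬ AnalyticAt ℂ s z} := by
      simpa [compl_ofPred] using (isOpen_analyticAt ℂ s).isClosed_compl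
    exact isOpen_ball.isLocallyClosed.inter this.isLocallyClosed
  have := hloc.locallyCompactSpace
  have : Countable B := hc.to_subtype
  have : Nonempty B := hne.to_subtype
  obtain ⟨⟨z, hzB⟩, hint⟩ := nonempty_interior_of_iUnion_of_closed (X := B) (f := fun b : B => {b})
    (fun b => isClosed_singleton) (by ext; simp)
  have hiso : ∀ᶠ w in 𝓝 z, w ∈ B → w = z := by
    obtain ⟨y, hy⟩ := hint
    have hyz := interior_subset hy
    simp only [mem_singleton_iff] at hyz
    subst hyz
    have := mem_interior_iff_mem_nhds.1 hy
    rw [mem_nhds_subtype_iff_nhdsWithin] at this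
    rw [mem_nhdsWithin_iff_eventually] at this
    filter_upwards [this] with w hw hwB
    simpa using hw hwB
  obtain ⟨hz, hzn⟩ := hzB
  apply hzn
  have hU : {w | w ∈ ball (0 : ℂ) 1 ∧ (w ∈ B → w = z)} ∈ 𝓝 z :=
    (isOpen_ball.eventually_mem hz).and hiso
  set U := {w | w ∈ ball (0 : ℂ) 1 ∧ (w ∈ B → w = z)}
  have hUd : DifferentiableOn ℂ s (U \ {z}) := by
    rintro w ⟨⟨hw1, hw2⟩, hw3⟩
    have : AnalyticAt ℂ s w := by
      by_contra hcon
      exact hw3 (hw2 ⟨hw1, hcon⟩)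
    exact this.differentiableAt.differentiableWithinAt
  have hext := Complex.differentiableOn_update_limUnder_of_bddAbove hU hUd ⟨1, by
    rintro _ ⟨w, hw, rfl⟩
    simpa using (mem_ball_zero_iff.1 (hs hw.1.1)).le⟩
  set e := Function.update s z (limUnder (𝓝[≠] z) s) with he
  have hes : ∀ w, w ≠ z → e w = s w := fun w hw => Function.update_of_ne hw _ _
  have hea : AnalyticAt ℂ e z := hext.analyticAt hU
  have htend : Tendsto s (𝓝[≠] z) (𝓝 (e z)) := by
    refine (hea.continuousAt.tendsto.mono_left nhdsWithin_le_nhds).congr' ?_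
    filter_upwards [self_mem_nhdsWithin] with w hw using hes w hw
  have hballev : ∀ᶠ w in 𝓝[≠] z, w ∈ ball (0 : ℂ) 1 :=
    nhdsWithin_le_nhds (isOpen_ball.mem_nhds hz)
  have hle : ‖e z‖ ≤ 1 := by
    refine le_of_tendsto htend.norm ?_
    filter_upwards [hballev] with w hw using (mem_ball_zero_iff.1 (hs hw)).le
  have hlt : ‖e z‖ < 1 := by
    by_contra hcon
    have hmax : IsLocalMax (norm ∘ e) z := by
      filter_upwards [isOpen_ball.mem_nhds hz] with w hw
      rcases eq_or_ne w z with rfl | hwz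
      · exact le_rfl
      · simp only [Function.comp, hes w hwz]
        exact (mem_ball_zero_iff.1 (hs hw)).le.trans (not_lt.1 hcon)
    have hconst := Complex.eventually_eq_of_isLocalMax_norm
      (hea.eventually_analyticAt.mono fun _ h => h.differentiableAt) hmax
    have hev : ∀ᶠ w in 𝓝[≠] z, w ≠ z ∧ w ∈ ball (0 : ℂ) 1 ∧ s w = e z := by
      filter_upwards [self_mem_nhdsWithin, hballev, nhdsWithin_le_nhds hconst] with w h1 h2 h3
      exact ⟨h1, h2, (hes w h1).symm.trans h3⟩
    obtain ⟨w, hw1, hw2, hw3⟩ := hev.exists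
    have hev2 : ∀ᶠ u in 𝓝[≠] z, u ≠ w :=
      nhdsWithin_le_nhds (isOpen_ne.mem_nhds hw1.symm)
    obtain ⟨u, ⟨hu1, hu2, hu3⟩, hu4⟩ := (hev.and hev2).exists
    exact hu4 (hψi hu2 hw2 (by rw [← h u hu2, ← h w hw2, hu3, hw3]))
  have hez : e z ∈ ball (0 : ℂ) 1 := mem_ball_zero_iff.2 hlt
  have hcφ : ContinuousAt φ (e z) := hφ.continuousOn.continuousAt (isOpen_ball.mem_nhds hez)
  have hcψ : ContinuousAt ψ z := hψ.continuousOn.continuousAt (isOpen_ball.mem_nhds hz)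
  have hlim : φ (e z) = ψ z := by
    refine tendsto_nhds_unique (hcφ.tendsto.comp htend) ?_
    refine (hcψ.tendsto.mono_left nhdsWithin_le_nhds).congr' ?_
    filter_upwards [hballev] with w hw using (h w hw).symm
  have heq : e z = s z := hφi hez (hs hz) (hlim.trans (h z hz).symm)
  have : e = s := by
    funext w
    rcases eq_or_ne w z with rfl | hwz
    · exact heq
    · exact hes w hwz
  rwa [this] at hea

open ComplexConjugate in
/-- The Möbius map of the disk sending `0` to `a`. -/
noncomputable def mob (a z : ℂ) : ℂ := (z + a) / (1 + conj a * z)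

theorem mob_den {a z : ℂ} (ha : ‖a‖ < 1) (hz : ‖z‖ < 1) :
    1 + (starRingEnd ℂ) a * z ≠ 0 := by
  intro h
  have h1 : (starRingEnd ℂ) a * z = -1 := by linear_combination h
  have h2 : ‖a‖ * ‖z‖ = 1 := by
    have := congrArg norm h1
    simpa using this
  nlinarith [norm_nonneg a, norm_nonneg z]

theorem mob_norm {a z : ℂ} (ha : ‖a‖ < 1) (hz : ‖z‖ < 1) : ‖mob a z‖ < 1 := by
  have hd := mob_den ha hz
  rw [mob, norm_div, div_lt_one (norm_pos_iff.2 hd)]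
  refine lt_of_pow_lt_pow_left₀ 2 (norm_nonneg _) ?_
  have ha2 : a.re * a.re + a.im * a.im < 1 := by
    rw [← Complex.normSq_apply, ← Complex.sq_norm]
    nlinarith [norm_nonneg a]
  have hz2 : z.re * z.re + z.im * z.im < 1 := by
    rw [← Complex.normSq_apply, ← Complex.sq_norm]
    nlinarith [norm_nonneg z]
  rw [Complex.sq_norm, Complex.sq_norm, Complex.normSq_apply, Complex.normSq_apply]
  simp
  nlinarith [mul_pos (sub_pos.2 ha2) (sub_pos.2 hz2)]

theorem mob_maps {a : ℂ} (ha : ‖a‖ < 1) : MapsTo (mob a) (ball 0 1) (ball 0 1) := by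
  intro z hz
  rw [mem_ball_zero_iff] at *
  exact mob_norm ha hz

theorem mob_diff {a : ℂ} (ha : ‖a‖ < 1) : DifferentiableOn ℂ (mob a) (ball 0 1) := by
  intro z hz
  rw [mem_ball_zero_iff] at hz
  have := mob_den ha hz
  unfold mob
  exact DifferentiableAt.differentiableWithinAt (by fun_prop (disch := assumption))

theorem mob_inv {a z : ℂ} (ha : ‖a‖ < 1) (hz : ‖z‖ < 1) : mob (-a) (mob a z) = z := by
  have h1 := mob_den ha hz
  have h2 := mob_den ha (z := -a) (by simpa using ha)
  have h3 : 1 + (starRingEnd ℂ) (-a) * mob a z =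
      (1 + (starRingEnd ℂ) a * (-a)) / (1 + (starRingEnd ℂ) a * z) := by
    unfold mob
    rw [map_neg]
    field_simp
    ring
  have h4 : mob a z + -a = z * (1 + (starRingEnd ℂ) a * (-a)) / (1 + (starRingEnd ℂ) a * z) := by
    rw [eq_div_iff h1, mob, add_mul, div_mul_cancel₀ _ h1]
    ring
  rw [mob, h3, h4, div_div_div_cancel_right₀ h1, mul_div_assoc, div_self h2, mul_one]

theorem mob_inv' {a z : ℂ} (ha : ‖a‖ < 1) (hz : ‖z‖ < 1) : mob a (mob (-a) z) = z := by
  have := mob_inv (a := -a) (by simpa using ha) hz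
  rwa [neg_neg] at this

theorem mob_zero (a : ℂ) : mob a 0 = a := by simp [mob]

theorem conj_ball {z : ℂ} (hz : z ∈ ball (0 : ℂ) 1) : (starRingEnd ℂ) z ∈ ball (0 : ℂ) 1 := by
  simpa using hz

theorem rot_of_auto (f g : ℂ → ℂ) (hf : DifferentiableOn ℂ f (ball 0 1))
    (hg : DifferentiableOn ℂ g (ball 0 1)) (hfm : MapsTo f (ball 0 1) (ball 0 1))
    (hgm : MapsTo g (ball 0 1) (ball 0 1)) (hgf : ∀ z ∈ ball (0 : ℂ) 1, g (f z) = z)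
    (h0 : f 0 = 0) : ∃ c : ℂ, ‖c‖ = 1 ∧ ∀ z ∈ ball (0 : ℂ) 1, f z = c * z := by
  have hg0 : g 0 = 0 := by
    have := hgf 0 (by simp)
    rwa [h0] at this
  have hn : ∀ z ∈ ball (0 : ℂ) 1, ‖f z‖ = ‖z‖ := by
    intro z hz
    have hfz := hfm hz
    have h1 := Complex.norm_le_norm_of_mapsTo_ball hf (hfm.mono_right ball_subset_closedBall) h0
      (mem_ball_zero_iff.1 hz)
    have h2 := Complex.norm_le_norm_of_mapsTo_ball hg (hgm.mono_right ball_subset_closedBall) hg0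
      (mem_ball_zero_iff.1 hfz)
    rw [hgf z hz] at h2
    exact le_antisymm h1 h2
  have hm : MapsTo f (ball 0 1) (closedBall (f 0) 1) := by
    rw [h0]; exact hfm.mono_right ball_subset_closedBall
  obtain ⟨c, hc, heq⟩ := Complex.affine_of_mapsTo_ball_of_exists_norm_dslope_eq_div' hf hm
    ⟨1 / 2, by simp; norm_num, by
      have := hn (1 / 2) (by simp; norm_num)
      rw [dslope_of_ne _ (by norm_num), slope_def_module, h0, norm_smul, sub_zero, sub_zero, this]
      norm_num⟩
  refine ⟨c, by simpa using hc, fun z hz => ?_⟩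
  rw [heq hz]
  simp [h0, mul_comm]

/-- The fixed set of an antiholomorphic involution of the disk is connected. -/
theorem fix_connected (s : ℂ → ℂ) (hs : DifferentiableOn ℂ s (ball 0 1))
    (hm : MapsTo s (ball 0 1) (ball 0 1))
    (hinv : ∀ z ∈ ball (0 : ℂ) 1,
      s ((starRingEnd ℂ) (s ((starRingEnd ℂ) z))) = z) :
    IsConnected {z ∈ ball (0 : ℂ) 1 | s ((starRingEnd ℂ) z) = z} := by
  set g : ℂ → ℂ := fun z => (starRingEnd ℂ) (s ((starRingEnd ℂ) z)) with hgdef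
  have hg : DifferentiableOn ℂ g (ball 0 1) := by
    intro z hz
    have : DifferentiableAt ℂ s ((starRingEnd ℂ) z) :=
      hs.differentiableAt (isOpen_ball.mem_nhds (conj_ball hz))
    exact (differentiableAt_conj_conj_iff.2 this).differentiableWithinAt
  have hgm : MapsTo g (ball 0 1) (ball 0 1) := fun z hz => conj_ball (hm (conj_ball hz))
  have hgs : ∀ z ∈ ball (0 : ℂ) 1, g (s z) = z := by
    intro z hz
    have := hinv _ (conj_ball hz)
    rw [Complex.conj_conj] at this
    simp only [hgdef, this, Complex.conj_conj]
  have h0b : (0 : ℂ) ∈ ball (0 : ℂ) 1 := by simp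
  set a := s 0 with ha
  have han : ‖a‖ < 1 := mem_ball_zero_iff.1 (hm h0b)
  have han' : ‖-a‖ < 1 := by simpa using han
  obtain ⟨c, hc, hcs⟩ := rot_of_auto (fun z => mob (-a) (s z)) (fun z => g (mob a z))
    ((mob_diff han').comp hs hm) (hg.comp (mob_diff han) (mob_maps han))
    ((mob_maps han').comp hm) (hgm.comp (mob_maps han))
    (fun z hz => by
      simp only [mob_inv' han (mem_ball_zero_iff.1 (hm hz)), hgs z hz])
    (by simp only [← ha]; simp [mob])
  have hform : ∀ z ∈ ball (0 : ℂ) 1, s z = mob a (c * z) := by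
    intro z hz
    rw [← hcs z hz, mob_inv' han (mem_ball_zero_iff.1 (hm hz))]
  have hab : a ∈ ball (0 : ℂ) 1 := hm h0b
  have hca : c * (starRingEnd ℂ) a = -a := by
    have h1 : s ((starRingEnd ℂ) a) = 0 := by
      have := hinv 0 h0b
      rwa [map_zero] at this
    have h2 := hcs _ (conj_ball hab)
    rw [← h2, h1, mob_zero]
  -- the midpoint
  set r := Real.sqrt (1 - ‖a‖ ^ 2) with hr
  have hpos : 0 < 1 - ‖a‖ ^ 2 := by nlinarith [norm_nonneg a]
  have hr0 : 0 < r := Real.sqrt_pos.2 hpos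
  have hr2 : r ^ 2 = 1 - ‖a‖ ^ 2 := Real.sq_sqrt hpos.le
  have haa : a * (starRingEnd ℂ) a = 1 - (r : ℂ) ^ 2 := by
    rw [Complex.mul_conj, ← Complex.sq_norm]
    norm_cast
    linarith
  set m : ℂ := a / (1 + (r : ℂ)) with hmdef
  have hr1 : (1 + (r : ℂ)) ≠ 0 := by
    norm_cast
    positivity
  have hrne : (r : ℂ) ≠ 0 := by exact_mod_cast hr0.ne'
  have hmn : ‖m‖ < 1 := by
    have : ‖(1 + (r : ℂ))‖ = 1 + r := by
      have : (1 + (r : ℂ)) = ((1 + r : ℝ) : ℂ) := by push_cast; rfl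
      rw [this, Complex.norm_real, Real.norm_of_nonneg (by positivity)]
    rw [hmdef, norm_div, this, div_lt_one (by positivity)]
    linarith
  have hmn' : ‖-m‖ < 1 := by simpa using hmn
  have hmb : m ∈ ball (0 : ℂ) 1 := mem_ball_zero_iff.2 hmn
  have hcm : (starRingEnd ℂ) m = (starRingEnd ℂ) a / (1 + (r : ℂ)) := by simp [hmdef]
  have hfix : s ((starRingEnd ℂ) m) = m := by
    rw [hform _ (conj_ball hmb)]
    have h1 : c * (starRingEnd ℂ) m = -a / (1 + (r : ℂ)) := by
      rw [hcm, ← hca]; ring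
    have h2 : 1 + (starRingEnd ℂ) a * (-a / (1 + (r : ℂ))) = r := by
      field_simp
      linear_combination -haa
    rw [mob, h1, h2, hmdef]
    field_simp
    ring
  have hcmn : ‖(starRingEnd ℂ) m‖ < 1 := by simpa using hmn
  have hcmn' : ‖-(starRingEnd ℂ) m‖ < 1 := by simpa using hmn
  obtain ⟨d, hd, hds⟩ := rot_of_auto (fun z => mob (-m) (s (mob ((starRingEnd ℂ) m) z)))
    (fun z => mob (-(starRingEnd ℂ) m) (g (mob m z)))
    ((mob_diff hmn').comp (hs.comp (mob_diff hcmn) (mob_maps hcmn)) (hm.comp (mob_maps hcmn)))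
    ((mob_diff hcmn').comp (hg.comp (mob_diff hmn) (mob_maps hmn)) (hgm.comp (mob_maps hmn)))
    ((mob_maps hmn').comp (hm.comp (mob_maps hcmn)))
    ((mob_maps hcmn').comp (hgm.comp (mob_maps hmn)))
    (fun z hz => by
      have h1 := mob_maps hcmn hz
      simp only [mob_inv' hmn (mem_ball_zero_iff.1 (hm h1)), hgs _ h1]
      exact mob_inv hcmn (mem_ball_zero_iff.1 hz))
    (by simp only [mob_zero, hfix]; simp [mob])
  have hconjmob : ∀ z, (starRingEnd ℂ) (mob m z) =
      mob ((starRingEnd ℂ) m) ((starRingEnd ℂ) z) := by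
    intro z; simp [mob]
  have himage : {z ∈ ball (0 : ℂ) 1 | s ((starRingEnd ℂ) z) = z} =
      mob m '' {w ∈ ball (0 : ℂ) 1 | d * (starRingEnd ℂ) w = w} := by
    ext z
    constructor
    · rintro ⟨hz, hsz⟩
      have hw := mob_maps hmn' hz
      have hzz := mob_inv' hmn (mem_ball_zero_iff.1 hz)
      refine ⟨mob (-m) z, ⟨hw, ?_⟩, hzz⟩
      rw [← hds _ (conj_ball hw)]
      simp only [← hconjmob, hzz, hsz]
    · rintro ⟨w, ⟨hw, hdw⟩, rfl⟩
      refine ⟨mob_maps hmn hw, ?_⟩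
      have h1 := hds _ (conj_ball hw)
      simp only [hdw, ← hconjmob] at h1
      have h2 := mob_inv' hmn (mem_ball_zero_iff.1 (hm (conj_ball (mob_maps hmn hw))))
      rw [h1] at h2
      exact h2.symm
  rw [himage]
  refine IsConnected.image ?_ _ ((mob_diff hmn).continuousOn.mono fun w hw => hw.1)
  refine Convex.isConnected ?_ ⟨0, by simp⟩
  intro x hx y hy p q hp hq hpq
  refine ⟨convex_ball _ _ hx.1 hy.1 hp hq hpq, ?_⟩
  have hx2 := hx.2
  have hy2 := hy.2
  simp only [Complex.real_smul, map_add, map_mul, Complex.conj_ofReal]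
  linear_combination p * hx2 + q * hy2

/-- **Theorem 4.1.** A real disk in the bidisk (the image of an injective
holomorphic immersion `φ : Δ → Δ × Δ` invariant under the anti-holomorphic
involution `τ(z,w) = (conj z, conj w)`) meets the real points `ℝ²` in a
nonempty connected set (a single arc). -/
theorem real_disk_meets_real_points_in_arc
    (φ : ℂ → ℂ × ℂ)
    (hφ : DifferentiableOn ℂ φ (Metric.ball 0 1))
    (hmaps : Set.MapsTo φ (Metric.ball 0 1)
      ((Metric.ball (0 : ℂ) 1) ×ˢ (Metric.ball (0 : ℂ) 1)))
    (hinj : Set.InjOn φ (Metric.ball 0 1))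
    (himm : ∀ z ∈ Metric.ball (0 : ℂ) 1, deriv φ z ≠ 0)
    (D : Set (ℂ × ℂ)) (hD : D = φ '' (Metric.ball 0 1))
    (hreal : (fun p : ℂ × ℂ => ((starRingEnd ℂ) p.1, (starRingEnd ℂ) p.2)) '' D = D)
    (F : Set (ℂ × ℂ))
    (hF : F = {p ∈ D | (starRingEnd ℂ) p.1 = p.1 ∧ (starRingEnd ℂ) p.2 = p.2}) :
    F.Nonempty ∧ IsConnected F := by
  have hch : ∀ z ∈ ball (0 : ℂ) 1, ∃ w ∈ ball (0 : ℂ) 1,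
      φ w = star (φ ((starRingEnd ℂ) z)) := by
    intro z hz
    have h1 : star (φ ((starRingEnd ℂ) z)) ∈ D := by
      rw [← hreal]
      exact ⟨φ ((starRingEnd ℂ) z), hD ▸ mem_image_of_mem φ (conj_ball hz), rfl⟩
    rw [hD] at h1
    obtain ⟨w, hw, h⟩ := h1
    exact ⟨w, hw, h⟩
  choose! s hsm hs using hch
  have hψ : DifferentiableOn ℂ (fun z => star (φ ((starRingEnd ℂ) z))) (ball 0 1) := by
    intro z hz
    have : DifferentiableAt ℂ φ ((starRingEnd ℂ) z) :=
      hφ.differentiableAt (isOpen_ball.mem_nhds (conj_ball hz))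
    exact (differentiableAt_star_conj_iff.2 this).differentiableWithinAt
  have hψi : InjOn (fun z => star (φ ((starRingEnd ℂ) z))) (ball 0 1) := by
    intro z hz w hw h
    have := hinj (conj_ball hz) (conj_ball hw) (star_injective h)
    exact (starRingEnd ℂ).injective this
  have hsd : DifferentiableOn ℂ s (ball 0 1) :=
    change_holo φ _ s hφ hψ hinj hψi himm hsm hs
  have hconn := fix_connected s hsd hsm (by
    intro z hz
    have h1 := hsm _ (conj_ball hz)
    refine hinj (hsm _ (conj_ball h1)) hz ?_
    rw [hs _ (conj_ball h1), Complex.conj_conj, hs _ (conj_ball hz), Complex.conj_conj, star_star])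
  have hFi : F = φ '' {z ∈ ball (0 : ℂ) 1 | s ((starRingEnd ℂ) z) = z} := by
    rw [hF, hD]
    ext p
    constructor
    · rintro ⟨⟨z, hz, rfl⟩, h1, h2⟩
      refine ⟨z, ⟨hz, hinj (hsm _ (conj_ball hz)) hz ?_⟩, rfl⟩
      rw [hs _ (conj_ball hz), Complex.conj_conj]
      exact Prod.ext h1 h2
    · rintro ⟨z, ⟨hz, hfz⟩, rfl⟩
      have h := hs _ (conj_ball hz)
      rw [hfz, Complex.conj_conj] at h
      exact ⟨mem_image_of_mem _ hz, congrArg Prod.fst h.symm, congrArg Prod.snd h.symm⟩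
  have hFc : IsConnected F := by
    rw [hFi]
    exact hconn.image _ (hφ.continuousOn.mono fun z hz => hz.1)
  exact ⟨hFc.nonempty, hFc⟩
end
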